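/- arXiv:1804.06209 — 3 statements merged into one kernel-verified Lean document; each statement's English description precedes it below -/
import Mathlib

section
/- Let a > 0, p ∈ [1,∞], and P f = f''' + a f'. There exists K = K(p,a) > 0 such that for all n ∈ ℕ and all f ∈ W^{3n,p}(-1,0): (1 + 1/a)^{-1}(1+a)^{-n} Σ_{i=0}^n ‖Pⁱ f‖_p ≤ ‖f‖_{3n,p} ≤ Kⁿ Σ_{i=0}^n ‖Pⁱ f‖_p. -/
open MeasureTheory
open scoped ENNReal

/-- The operator `P f = f''' + a f'`. -/
noncomputable def Pop (a : ℝ) (f : ℝ → ℝ) : ℝ → ℝ :=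
  fun x => iteratedDeriv 3 f x + a * deriv f x

/-- The `W^{k,p}(-1,0)` norm `‖f‖_{k,p} = Σ_{i=0}^{k} ‖∂ₓⁱ f‖_{L^p(-1,0)}`. -/
noncomputable def sobNorm (p : ℝ≥0∞) (k : ℕ) (f : ℝ → ℝ) : ℝ≥0∞ :=
  ∑ i ∈ Finset.range (k + 1),
    eLpNorm (iteratedDeriv i f) p (volume.restrict (Set.Ioo (-1 : ℝ) 0))

/-- The bump weight. -/
noncomputable def wt (x : ℝ) : ℝ := 30 * (x ^ 2 + 2 * x ^ 3 + x ^ 4)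
noncomputable def wt1 (x : ℝ) : ℝ := 30 * (2 * x + 6 * x ^ 2 + 4 * x ^ 3)
noncomputable def wt2 (x : ℝ) : ℝ := 30 * (2 + 12 * x + 12 * x ^ 2)

lemma wt_cont : Continuous wt := by unfold wt; fun_prop
lemma wt1_cont : Continuous wt1 := by unfold wt1; fun_prop
lemma wt2_cont : Continuous wt2 := by unfold wt2; fun_prop

lemma wt_deriv (x : ℝ) : HasDerivAt wt (wt1 x) x := by
  unfold wt wt1
  have h := ((((hasDerivAt_id x).pow 2).add (((hasDerivAt_id x).pow 3).const_mul 2)).add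
    ((hasDerivAt_id x).pow 4)).const_mul 30
  refine HasDerivAt.congr_deriv (f := fun x : ℝ => 30 * (x ^ 2 + 2 * x ^ 3 + x ^ 4)) h ?_
  simp; ring

lemma wt1_deriv (x : ℝ) : HasDerivAt wt1 (wt2 x) x := by
  unfold wt1 wt2
  have h := ((((hasDerivAt_id x).const_mul 2).add (((hasDerivAt_id x).pow 2).const_mul 6)).add
    (((hasDerivAt_id x).pow 3).const_mul 4)).const_mul 30
  refine HasDerivAt.congr_deriv (f := fun x : ℝ => 30 * (2 * x + 6 * x ^ 2 + 4 * x ^ 3)) h ?_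
  simp; ring

lemma wt_int : ∫ x in (-1 : ℝ)..0, wt x = 1 := by
  have h : ∀ x ∈ Set.uIcc (-1 : ℝ) 0,
      HasDerivAt (fun x : ℝ => 10 * x ^ 3 + 15 * x ^ 4 + 6 * x ^ 5) (wt x) x := by
    intro x _
    have h := (((((hasDerivAt_id x).pow 3).const_mul 10).add
      (((hasDerivAt_id x).pow 4).const_mul 15)).add (((hasDerivAt_id x).pow 5).const_mul 6))
    refine HasDerivAt.congr_deriv
      (f := fun x : ℝ => 10 * x ^ 3 + 15 * x ^ 4 + 6 * x ^ 5) h ?_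
    unfold wt; simp; ring
  rw [intervalIntegral.integral_eq_sub_of_hasDerivAt h (wt_cont.intervalIntegrable _ _)]
  norm_num

lemma wt_nonneg (x : ℝ) : 0 ≤ wt x := by
  have : wt x = 30 * (x * (1 + x)) ^ 2 := by unfold wt; ring
  rw [this]; positivity

lemma wt_bd (x : ℝ) (hx : x ∈ Set.Icc (-1 : ℝ) 0) : |wt x| ≤ 2 := by
  obtain ⟨h1, h2⟩ := hx
  have : wt x = 30 * (-x * (1 + x)) ^ 2 := by unfold wt; ring
  rw [abs_of_nonneg (wt_nonneg x), this]
  have h3 : 0 ≤ -x * (1 + x) := mul_nonneg (by linarith) (by linarith)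
  have h4 : -x * (1 + x) ≤ 1 / 4 := by nlinarith [sq_nonneg (x + 1 / 2)]
  nlinarith

lemma wt1_bd (x : ℝ) (hx : x ∈ Set.Icc (-1 : ℝ) 0) : |wt1 x| ≤ 15 := by
  obtain ⟨h1, h2⟩ := hx
  have : wt1 x = 60 * ((x * (1 + x)) * (1 + 2 * x)) := by unfold wt1; ring
  rw [this, abs_mul, abs_mul]
  have h3 : |x * (1 + x)| ≤ 1 / 4 := by
    rw [abs_le]; constructor <;> nlinarith [sq_nonneg (x + 1 / 2)]
  have h4 : |1 + 2 * x| ≤ 1 := by rw [abs_le]; constructor <;> linarith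
  have := mul_le_mul h3 h4 (abs_nonneg _) (by norm_num)
  rw [abs_of_nonneg (by norm_num : (0:ℝ) ≤ 60)]
  linarith

lemma wt2_bd (x : ℝ) (hx : x ∈ Set.Icc (-1 : ℝ) 0) : |wt2 x| ≤ 60 := by
  obtain ⟨h1, h2⟩ := hx
  unfold wt2
  rw [abs_le]; constructor <;> nlinarith [sq_nonneg (x + 1 / 2)]

lemma int_bd (v u : ℝ → ℝ) (hv : Continuous v) (hu : Continuous u) (c : ℝ)
    (hc : ∀ x ∈ Set.Icc (-1 : ℝ) 0, |v x| ≤ c) :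
    |∫ x in (-1 : ℝ)..0, v x * u x| ≤ c * ∫ x in (-1 : ℝ)..0, |u x| := by
  rw [← intervalIntegral.integral_const_mul]
  refine (intervalIntegral.abs_integral_le_integral_abs (by norm_num)).trans ?_
  apply intervalIntegral.integral_mono_on (by norm_num)
  · exact (hv.mul hu).abs.intervalIntegrable _ _
  · exact (continuous_const.mul hu.abs).intervalIntegrable _ _
  · intro x hx
    rw [abs_mul]
    exact mul_le_mul_of_nonneg_right (hc x hx) (abs_nonneg _)

lemma osc_bd (u u' : ℝ → ℝ) (hu : ∀ x, HasDerivAt u (u' x) x) (hc : Continuous u')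
    (x y : ℝ) (hx : x ∈ Set.Icc (-1 : ℝ) 0) (hy : y ∈ Set.Icc (-1 : ℝ) 0) :
    |u x - u y| ≤ ∫ t in (-1 : ℝ)..0, |u' t| := by
  wlog hxy : y ≤ x generalizing x y
  · rw [abs_sub_comm]; exact this y x hy hx (by linarith)
  rw [← intervalIntegral.integral_eq_sub_of_hasDerivAt (fun t _ => hu t)
    (hc.intervalIntegrable _ _)]
  refine (intervalIntegral.abs_integral_le_integral_abs hxy).trans ?_
  exact intervalIntegral.integral_mono_interval hy.1 hxy hx.2
    (Filter.Eventually.of_forall fun t => abs_nonneg _) (hc.abs.intervalIntegrable _ _)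

lemma sup_bd (u u' : ℝ → ℝ) (hu : ∀ x, HasDerivAt u (u' x) x) (hc : Continuous u')
    (x : ℝ) (hx : x ∈ Set.Icc (-1 : ℝ) 0) :
    |u x| ≤ |∫ y in (-1 : ℝ)..0, wt y * u y| + ∫ t in (-1 : ℝ)..0, |u' t| := by
  have huc : Continuous u := continuous_iff_continuousAt.2 fun x => (hu x).continuousAt
  have e : u x = (∫ y in (-1 : ℝ)..0, wt y * u y) + ∫ y in (-1 : ℝ)..0, wt y * (u x - u y) := by
    have i1 : IntervalIntegrable (fun y => wt y * u y) volume (-1) 0 :=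
      (wt_cont.mul huc).intervalIntegrable _ _
    have i2 : IntervalIntegrable (fun y => wt y * (u x - u y)) volume (-1) 0 :=
      (wt_cont.mul (continuous_const.sub huc)).intervalIntegrable _ _
    rw [← intervalIntegral.integral_add i1 i2]
    have : ∀ y, wt y * u y + wt y * (u x - u y) = wt y * u x := fun y => by ring
    simp_rw [this]
    rw [intervalIntegral.integral_mul_const, wt_int, one_mul]
  have b : |∫ y in (-1 : ℝ)..0, wt y * (u x - u y)| ≤ ∫ t in (-1 : ℝ)..0, |u' t| := by
    refine (intervalIntegral.abs_integral_le_integral_abs (by norm_num)).trans ?_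
    have : ∫ t in (-1 : ℝ)..0, |u' t|
        = ∫ y in (-1 : ℝ)..0, wt y * ∫ t in (-1 : ℝ)..0, |u' t| := by
      rw [intervalIntegral.integral_mul_const, wt_int, one_mul]
    rw [this]
    apply intervalIntegral.integral_mono_on (by norm_num)
    · exact (wt_cont.mul (continuous_const.sub huc)).abs.intervalIntegrable _ _
    · exact (wt_cont.mul continuous_const).intervalIntegrable _ _
    · intro y hy
      rw [abs_mul, abs_of_nonneg (wt_nonneg y)]
      exact mul_le_mul_of_nonneg_left (osc_bd u u' hu hc x y hx hy) (wt_nonneg y)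
  calc |u x| = _ := congrArg abs e
    _ ≤ _ := abs_add_le _ _
    _ ≤ _ := by linarith

lemma parts (v v' u u' : ℝ → ℝ) (hv : ∀ x, HasDerivAt v (v' x) x) (hv' : Continuous v')
    (hu : ∀ x, HasDerivAt u (u' x) x) (hu' : Continuous u') (h0 : v 0 * u 0 = 0)
    (h1 : v (-1) * u (-1) = 0) :
    ∫ x in (-1 : ℝ)..0, v x * u' x = - ∫ x in (-1 : ℝ)..0, v' x * u x := by
  rw [intervalIntegral.integral_mul_deriv_eq_deriv_mul (fun x _ => hv x) (fun x _ => hu x)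
    (hv'.intervalIntegrable _ _) (hu'.intervalIntegrable _ _), h0, h1]
  ring

lemma base_real (a : ℝ) (ha : 0 < a) (f f1 f2 f3 : ℝ → ℝ) (h0 : ∀ x, HasDerivAt f (f1 x) x)
    (h1 : ∀ x, HasDerivAt f1 (f2 x) x) (h2 : ∀ x, HasDerivAt f2 (f3 x) x) (h3 : Continuous f3)
    (x : ℝ) (hx : x ∈ Set.Icc (-1 : ℝ) 0) :
    |f1 x| ≤ (75 + 3 * a) * ((∫ t in (-1 : ℝ)..0, |f t|) + ∫ t in (-1 : ℝ)..0, |f3 t + a * f1 t|)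
    ∧ |f2 x + a * f x| ≤
      (75 + 3 * a) * ((∫ t in (-1 : ℝ)..0, |f t|) + ∫ t in (-1 : ℝ)..0, |f3 t + a * f1 t|) := by
  have c0 : Continuous f := continuous_iff_continuousAt.2 fun x => (h0 x).continuousAt
  have c1 : Continuous f1 := continuous_iff_continuousAt.2 fun x => (h1 x).continuousAt
  have c2 : Continuous f2 := continuous_iff_continuousAt.2 fun x => (h2 x).continuousAt
  set F := ∫ t in (-1 : ℝ)..0, |f t| with hF
  set G := ∫ t in (-1 : ℝ)..0, |f3 t + a * f1 t| with hG
  have F0 : 0 ≤ F := intervalIntegral.integral_nonneg (by norm_num) fun _ _ => abs_nonneg _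
  have G0 : 0 ≤ G := intervalIntegral.integral_nonneg (by norm_num) fun _ _ => abs_nonneg _
  have w0 : wt 0 = 0 := by norm_num [wt]
  have w1 : wt (-1) = 0 := by norm_num [wt]
  have w0' : wt1 0 = 0 := by norm_num [wt1]
  have w1' : wt1 (-1) = 0 := by norm_num [wt1]
  have I0 := int_bd wt f wt_cont c0 2 wt_bd
  have I1 : |∫ y in (-1 : ℝ)..0, wt y * f1 y| ≤ 15 * F := by
    rw [parts wt wt1 f f1 wt_deriv wt1_cont h0 c1 (by simp [w0]) (by simp [w1]), abs_neg]
    exact int_bd wt1 f wt1_cont c0 15 wt1_bd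
  have I2 : |∫ y in (-1 : ℝ)..0, wt y * f2 y| ≤ 60 * F := by
    rw [parts wt wt1 f1 f2 wt_deriv wt1_cont h1 c2 (by simp [w0]) (by simp [w1]),
      parts wt1 wt2 f f1 wt1_deriv wt2_cont h0 c1 (by simp [w0']) (by simp [w1']), neg_neg]
    exact int_bd wt2 f wt2_cont c0 60 wt2_bd
  have Ih : |∫ y in (-1 : ℝ)..0, wt y * (f2 y + a * f y)| ≤ (60 + 2 * a) * F := by
    have : ∀ y, wt y * (f2 y + a * f y) = wt y * f2 y + a * (wt y * f y) := fun y => by ring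
    simp_rw [this]
    have i1 : IntervalIntegrable (fun y => wt y * f2 y) volume (-1) 0 :=
      (wt_cont.mul c2).intervalIntegrable _ _
    have i2 : IntervalIntegrable (fun y => a * (wt y * f y)) volume (-1) 0 :=
      (continuous_const.mul (wt_cont.mul c0)).intervalIntegrable _ _
    rw [intervalIntegral.integral_add i1 i2,
      intervalIntegral.integral_const_mul]
    refine (abs_add_le _ _).trans ?_
    rw [abs_mul, abs_of_pos ha]
    nlinarith
  have Hh : ∀ y ∈ Set.Icc (-1 : ℝ) 0, |f2 y + a * f y| ≤ (60 + 2 * a) * F + G := by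
    intro y hy
    have := sup_bd (fun y => f2 y + a * f y) (fun y => f3 y + a * f1 y)
      (fun y => (h2 y).add ((h0 y).const_mul a)) (by fun_prop) y hy
    linarith
  have J : ∫ t in (-1 : ℝ)..0, |f2 t| ≤ (60 + 2 * a) * F + G + a * F := by
    have : (60 + 2 * a) * F + G + a * F
        = ∫ t in (-1 : ℝ)..0, (((60 + 2 * a) * F + G) + a * |f t|) := by
      have i2 : IntervalIntegrable (fun y => a * |f y|) volume (-1) 0 :=
        (continuous_const.mul c0.abs).intervalIntegrable _ _
      rw [intervalIntegral.integral_add (continuous_const.intervalIntegrable _ _) i2,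
        intervalIntegral.integral_const_mul]
      simp [hF]
    rw [this]
    apply intervalIntegral.integral_mono_on (by norm_num) (c2.abs.intervalIntegrable _ _)
    · exact (continuous_const.add (continuous_const.mul c0.abs)).intervalIntegrable _ _
    · intro y hy
      have e : f2 y = (f2 y + a * f y) - a * f y := by ring
      calc |f2 y| = _ := congrArg abs e
        _ ≤ _ := abs_sub _ _
        _ ≤ _ := by
          rw [abs_mul, abs_of_pos ha]
          linarith [Hh y hy]
  have aF : 0 ≤ a * F := by positivity
  have aG : 0 ≤ a * G := by positivity
  constructor
  · have := sup_bd f1 f2 h1 c2 x hx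
    linarith
  · have := Hh x hx
    linarith

/-- Abbreviation for the norm. -/
noncomputable def NN (p : ℝ≥0∞) (f : ℝ → ℝ) : ℝ≥0∞ :=
  eLpNorm f p (volume.restrict (Set.Ioo (-1 : ℝ) 0))

instance muProb : IsProbabilityMeasure (volume.restrict (Set.Ioo (-1 : ℝ) 0)) :=
  ⟨by simp⟩

lemma L1_le (p : ℝ≥0∞) (hp : 1 ≤ p) (f : ℝ → ℝ) (hf : Continuous f) :
    ENNReal.ofReal (∫ t in (-1 : ℝ)..0, |f t|) ≤ NN p f := by
  unfold NN
  refine le_trans (le_of_eq ?_)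
    (eLpNorm_le_eLpNorm_of_exponent_le hp hf.aestronglyMeasurable)
  rw [eLpNorm_one_eq_lintegral_enorm, intervalIntegral.integral_of_le (by norm_num),
    integral_Ioc_eq_integral_Ioo, ofReal_integral_eq_lintegral_ofReal]
  · simp_rw [← Real.norm_eq_abs, ofReal_norm]
  · exact (hf.abs.integrableOn_Icc (a := -1) (b := 0)).mono_set Set.Ioo_subset_Icc_self
  · exact Filter.Eventually.of_forall fun t => abs_nonneg _

lemma NN_le_sup (p : ℝ≥0∞) (f : ℝ → ℝ) (C : ℝ)
    (h : ∀ x ∈ Set.Icc (-1 : ℝ) 0, |f x| ≤ C) : NN p f ≤ ENNReal.ofReal C := by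
  unfold NN
  refine (eLpNorm_le_of_ae_bound (C := C) ?_).trans (by simp)
  rw [ae_restrict_iff' measurableSet_Ioo]
  exact Filter.Eventually.of_forall fun x hx => h x (Set.Ioo_subset_Icc_self hx)

lemma NN_comb (p : ℝ≥0∞) (hp : 1 ≤ p) (f g : ℝ → ℝ) (hf : Continuous f) (hg : Continuous g)
    (c a : ℝ) (ha : 0 ≤ a) (hc : |c| = a) :
    NN p (fun x => f x + c * g x) ≤ NN p f + ENNReal.ofReal a * NN p g := by
  unfold NN
  have := eLpNorm_add_le (μ := volume.restrict (Set.Ioo (-1 : ℝ) 0)) hf.aestronglyMeasurable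
    (hg.const_smul c).aestronglyMeasurable hp
  refine this.trans (le_of_eq ?_)
  congr 1
  have := eLpNorm_const_smul c g p (volume.restrict (Set.Ioo (-1 : ℝ) 0))
  refine Eq.trans this ?_
  rw [← hc, ← Real.norm_eq_abs, ofReal_norm]

abbrev Sm (f : ℝ → ℝ) : Prop := ContDiff ℝ (⊤ : ℕ∞) f

lemma Sm.it {f : ℝ → ℝ} (hf : Sm f) (m : ℕ) : Sm (iteratedDeriv m f) := by
  rw [iteratedDeriv_eq_iterate]
  exact ContDiff.iterate_deriv m hf

lemma Sm.hasD {f : ℝ → ℝ} (hf : Sm f) (m : ℕ) (x : ℝ) :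
    HasDerivAt (iteratedDeriv m f) (iteratedDeriv (m + 1) f x) x := by
  rw [iteratedDeriv_succ]
  exact ((hf.it m).differentiable (by simp) x).hasDerivAt

lemma Sm.pop {f : ℝ → ℝ} (hf : Sm f) (a : ℝ) : Sm (Pop a f) := by
  unfold Pop
  have h1 := hf.it 1
  rw [iteratedDeriv_one] at h1
  exact (hf.it 3).add (contDiff_const.mul h1)

lemma it_pop {f : ℝ → ℝ} (hf : Sm f) (a : ℝ) (m : ℕ) :
    iteratedDeriv m (Pop a f) =
      fun x => iteratedDeriv (m + 3) f x + a * iteratedDeriv (m + 1) f x := by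
  induction m with
  | zero => funext x; simp [Pop, iteratedDeriv_one]
  | succ m ih =>
    funext x
    rw [iteratedDeriv_succ, ih]
    have h := (hf.hasD (m + 3) x).add ((hf.hasD (m + 1) x).const_mul a)
    rw [show m + 1 + 3 = m + 3 + 1 by ring]
    exact h.deriv

lemma base_NN (a : ℝ) (ha : 0 < a) (p : ℝ≥0∞) (hp : 1 ≤ p) : ∃ C : ℝ, 0 < C ∧
    ∀ f, Sm f → ∀ m, NN p (iteratedDeriv (m + 1) f) + NN p (iteratedDeriv (m + 2) f)
      + NN p (iteratedDeriv (m + 3) f) ≤ ENNReal.ofReal C *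
        (NN p (iteratedDeriv m f) + NN p (iteratedDeriv m (Pop a f))) := by
  refine ⟨(75 + 3 * a) + ((75 + 3 * a) + a) + (1 + a * (75 + 3 * a)), by positivity, ?_⟩
  intro f hf m
  have B0 : 0 ≤ 75 + 3 * a := by positivity
  have hb := base_real a ha _ _ _ _ (hf.hasD m) (hf.hasD (m + 1)) (hf.hasD (m + 2))
    (hf.it (m + 3)).continuous
  have hP := it_pop hf a m
  set X := NN p (iteratedDeriv m f) with hX
  set Y := NN p (iteratedDeriv m (Pop a f)) with hY
  have key : ENNReal.ofReal ((75 + 3 * a) * ((∫ t in (-1 : ℝ)..0, |iteratedDeriv m f t|)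
      + ∫ t in (-1 : ℝ)..0, |iteratedDeriv (m + 3) f t + a * iteratedDeriv (m + 1) f t|))
      ≤ ENNReal.ofReal (75 + 3 * a) * (X + Y) := by
    rw [ENNReal.ofReal_mul B0]
    gcongr
    refine ENNReal.ofReal_add_le.trans (add_le_add ?_ ?_)
    · exact L1_le p hp _ (hf.it m).continuous
    · rw [hY, hP]
      exact L1_le p hp _ ((hf.it (m + 3)).continuous.add
        (continuous_const.mul (hf.it (m + 1)).continuous))
  have E1 : NN p (iteratedDeriv (m + 1) f) ≤ ENNReal.ofReal (75 + 3 * a) * (X + Y) :=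
    (NN_le_sup p _ _ fun x hx => (hb x hx).1).trans key
  have Eh := (NN_le_sup p _ _ fun x hx => (hb x hx).2).trans key
  have E2 : NN p (iteratedDeriv (m + 2) f) ≤
      ENNReal.ofReal (75 + 3 * a) * (X + Y) + ENNReal.ofReal a * (X + Y) := by
    have := NN_comb p hp (fun x => iteratedDeriv (m + 1 + 1) f x + a * iteratedDeriv m f x)
      (iteratedDeriv m f) ((hf.it (m + 2)).continuous.add
        (continuous_const.mul (hf.it m).continuous)) (hf.it m).continuous (-a) a ha.le
        (by rw [abs_neg, abs_of_pos ha])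
    have e : (fun x => iteratedDeriv (m + 1 + 1) f x + a * iteratedDeriv m f x
        + -a * iteratedDeriv m f x) = iteratedDeriv (m + 2) f := by
      funext x; ring
    rw [e] at this
    exact this.trans (add_le_add Eh (by gcongr; exact le_self_add))
  have E3 : NN p (iteratedDeriv (m + 3) f) ≤
      (X + Y) + ENNReal.ofReal a * (ENNReal.ofReal (75 + 3 * a) * (X + Y)) := by
    have := NN_comb p hp (iteratedDeriv m (Pop a f))
      (iteratedDeriv (m + 1) f) ((hf.pop a).it m).continuous (hf.it (m + 1)).continuous (-a) a ha.le
        (by rw [abs_neg, abs_of_pos ha])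
    have e : (fun x => iteratedDeriv m (Pop a f) x
        + -a * iteratedDeriv (m + 1) f x) = iteratedDeriv (m + 3) f := by
      funext x; rw [hP]; ring
    rw [e] at this
    exact this.trans (add_le_add le_add_self (by gcongr))
  refine (add_le_add (add_le_add E1 E2) E3).trans (le_of_eq ?_)
  clear E1 E2 E3 Eh key hb
  generalize 75 + 3 * a = B at B0 ⊢
  rw [ENNReal.ofReal_add (by positivity) (by positivity),
    ENNReal.ofReal_add (by positivity) (by positivity),
    ENNReal.ofReal_add B0 ha.le, ENNReal.ofReal_add zero_le_one (by positivity),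
    ENNReal.ofReal_mul ha.le, ENNReal.ofReal_one]
  ring

lemma lower_aux (a : ℝ) (ha : 0 < a) (p : ℝ≥0∞) (hp : 1 ≤ p) (i : ℕ) :
    ∀ f, Sm f → ∀ M : ℝ≥0∞, (∀ m ≤ 3 * i, NN p (iteratedDeriv m f) ≤ M) →
      NN p ((Pop a)^[i] f) ≤ ENNReal.ofReal ((1 + a) ^ i) * M := by
  induction i with
  | zero => intro f hf M h; simpa using h 0 le_rfl
  | succ i ih =>
    intro f hf M h
    rw [Function.iterate_succ_apply]
    have := ih (Pop a f) (hf.pop a) (ENNReal.ofReal (1 + a) * M) (by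
      intro m hm
      rw [it_pop hf a m]
      refine (NN_comb p hp _ _ (hf.it (m + 3)).continuous (hf.it (m + 1)).continuous a a ha.le
        (abs_of_pos ha)).trans ?_
      rw [ENNReal.ofReal_add zero_le_one ha.le, add_mul, ENNReal.ofReal_one, one_mul]
      gcongr
      · exact h _ (by omega)
      · exact h _ (by omega))
    rwa [← mul_assoc, ← ENNReal.ofReal_mul (by positivity), ← pow_succ] at this

lemma upper_aux (a C : ℝ) (hC : 0 < C) (p : ℝ≥0∞)
    (hb : ∀ f, Sm f → ∀ m, NN p (iteratedDeriv (m + 1) f) + NN p (iteratedDeriv (m + 2) f)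
      + NN p (iteratedDeriv (m + 3) f) ≤ ENNReal.ofReal C *
        (NN p (iteratedDeriv m f) + NN p (iteratedDeriv m (Pop a f)))) (n : ℕ) :
    ∀ f, Sm f → sobNorm p (3 * n) f ≤ ENNReal.ofReal ((1 + 2 * C) ^ n) *
      ∑ i ∈ Finset.range (n + 1), NN p ((Pop a)^[i] f) := by
  induction n with
  | zero => intro f hf; simp [sobNorm, NN]
  | succ n ih =>
    intro f hf
    have le1 : ∀ g, NN p (iteratedDeriv (3 * n) g) ≤ sobNorm p (3 * n) g := by
      intro g
      unfold sobNorm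
      rw [Finset.sum_range_succ]
      exact le_add_self
    have e : sobNorm p (3 * (n + 1)) f = sobNorm p (3 * n) f +
        (NN p (iteratedDeriv (3 * n + 1) f) + NN p (iteratedDeriv (3 * n + 2) f)
      + NN p (iteratedDeriv (3 * n + 3) f)) := by
      unfold sobNorm NN
      rw [show 3 * (n + 1) + 1 = 3 * n + 1 + 1 + 1 + 1 by ring, Finset.sum_range_succ,
        Finset.sum_range_succ, Finset.sum_range_succ]
      ring
    set S := ∑ i ∈ Finset.range (n + 1 + 1), NN p ((Pop a)^[i] f) with hS
    have A : sobNorm p (3 * n) f ≤ ENNReal.ofReal ((1 + 2 * C) ^ n) * S := by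
      refine (ih f hf).trans ?_
      gcongr
      rw [hS, Finset.sum_range_succ _ (n + 1)]
      exact le_self_add
    have B : sobNorm p (3 * n) (Pop a f) ≤ ENNReal.ofReal ((1 + 2 * C) ^ n) * S := by
      refine (ih _ (hf.pop a)).trans ?_
      gcongr
      rw [hS, Finset.sum_range_succ' _ (n + 1)]
      exact le_self_add
    rw [e]
    calc _ ≤ ENNReal.ofReal ((1 + 2 * C) ^ n) * S + ENNReal.ofReal C *
          (ENNReal.ofReal ((1 + 2 * C) ^ n) * S + ENNReal.ofReal ((1 + 2 * C) ^ n) * S) := by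
          refine add_le_add A ((hb f hf (3 * n)).trans ?_)
          gcongr
          · exact (le1 _).trans A
          · exact (le1 _).trans B
      _ = _ := by
          rw [pow_succ (1 + 2 * C) n, ENNReal.ofReal_mul (by positivity),
            ENNReal.ofReal_add zero_le_one (by positivity), two_mul,
            ENNReal.ofReal_add hC.le hC.le, ENNReal.ofReal_one]
          ring

lemma lower_main (a : ℝ) (ha : 0 < a) (p : ℝ≥0∞) (hp : 1 ≤ p) (n : ℕ) (f : ℝ → ℝ) (hf : Sm f) :
    ENNReal.ofReal ((1 + 1 / a)⁻¹ * ((1 + a) ^ n)⁻¹) *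
          (∑ i ∈ Finset.range (n + 1), NN p ((Pop a)^[i] f)) ≤ sobNorm p (3 * n) f := by
  have h1 : ∑ i ∈ Finset.range (n + 1), NN p ((Pop a)^[i] f) ≤
      ENNReal.ofReal (∑ i ∈ Finset.range (n + 1), (1 + a) ^ i) * sobNorm p (3 * n) f := by
    rw [ENNReal.ofReal_sum_of_nonneg (fun i _ => by positivity), Finset.sum_mul]
    refine Finset.sum_le_sum fun i hi => ?_
    refine lower_aux a ha p hp i f hf _ fun m hm => ?_
    rw [Finset.mem_range] at hi
    unfold sobNorm NN
    exact Finset.single_le_sum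
      (f := fun i => eLpNorm (iteratedDeriv i f) p (volume.restrict (Set.Ioo (-1 : ℝ) 0)))
      (fun _ _ => zero_le) (Finset.mem_range.2 (by omega))
  have h2 : (1 + 1 / a)⁻¹ * ((1 + a) ^ n)⁻¹ * (∑ i ∈ Finset.range (n + 1), (1 + a) ^ i) ≤ 1 := by
    rw [geom_sum_eq (by linarith), ← mul_inv, inv_mul_le_iff₀ (by positivity), mul_one,
      add_sub_cancel_left, div_le_iff₀ ha]
    have : (1 + 1 / a) * (1 + a) ^ n * a = (1 + a) ^ (n + 1) := by
      field_simp; ring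
    rw [this]; linarith
  calc _ ≤ _ := mul_le_mul_right h1 _
    _ = ENNReal.ofReal ((1 + 1 / a)⁻¹ * ((1 + a) ^ n)⁻¹ *
        (∑ i ∈ Finset.range (n + 1), (1 + a) ^ i)) * sobNorm p (3 * n) f := by
        rw [← mul_assoc, ← ENNReal.ofReal_mul (by positivity)]
    _ ≤ 1 * sobNorm p (3 * n) f := by
        gcongr
        exact ENNReal.ofReal_le_one.2 h2
    _ = _ := one_mul _

/-- there exists `K = K(p,a) > 0` such that for all `n` and all
`f ∈ W^{3n,p}(-1,0)`:
`(1+1/a)⁻¹ (1+a)⁻ⁿ Σ_{i=0}^n ‖Pⁱ f‖_p ≤ ‖f‖_{3n,p} ≤ Kⁿ Σ_{i=0}^n ‖Pⁱ f‖_p`. -/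
theorem stmt6 (a : ℝ) (ha : 0 < a) (p : ℝ≥0∞) (hp : 1 ≤ p) :
    ∃ K : ℝ, 0 < K ∧ ∀ n : ℕ, ∀ f : ℝ → ℝ, ContDiff ℝ (⊤ : ℕ∞) f →
      ENNReal.ofReal ((1 + 1 / a)⁻¹ * ((1 + a) ^ n)⁻¹) *
          (∑ i ∈ Finset.range (n + 1),
            eLpNorm ((Pop a)^[i] f) p (volume.restrict (Set.Ioo (-1 : ℝ) 0))) ≤
        sobNorm p (3 * n) f ∧
      sobNorm p (3 * n) f ≤ ENNReal.ofReal (K ^ n) *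
          ∑ i ∈ Finset.range (n + 1),
            eLpNorm ((Pop a)^[i] f) p (volume.restrict (Set.Ioo (-1 : ℝ) 0)) := by
  obtain ⟨C, hC, hb⟩ := base_NN a ha p hp
  exact ⟨1 + 2 * C, by positivity, fun n f hf =>
    ⟨lower_main a ha p hp n f hf, upper_aux a C hC p hb n f hf⟩⟩
end

section
/- Let s ∈ [1,3), T > 0, and z ∈ G^s([0,T]), i.e. there exist M > 0, R > 0 with |z^{(i)}(t)| ≤ M (i!)^s / R^i for all i ∈ ℕ and t ∈ [0,T]. Then the series y(x,t) = Σ_{i≥0} g_i(x) z^{(i)}(t), with g_i the generating functions for P = ∂ₓ³ + a∂ₓ, converges in C^∞([-1,0]×[0,T]); the sum y is Gevrey of order s/3 in x and s in t, and solves ∂ₜy + ∂ₓ³y + a∂ₓy = 0 on (-1,0)×(0,T) with y(0,t) = ∂ₓy(0,t) = 0 and ∂ₓ²y(0,t) = z(t). -/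
lemma aux_series (A : ℕ → ℝ → ℝ) (hA : ∀ i, ContDiff ℝ (⊤ : ℕ∞) (A i)) (v : ℕ → ℕ → ℝ)
    (hv : ∀ k, Summable (v k)) (h : ∀ k i x, |iteratedDeriv k (A i) x| ≤ v k i) :
    ContDiff ℝ (⊤ : ℕ∞) (fun x => ∑' i, A i x) ∧
    ∀ k, iteratedDeriv k (fun x => ∑' i, A i x) = fun x => ∑' i, iteratedDeriv k (A i) x := by
  constructor
  · refine contDiff_tsum (v := v) hA (fun k _ => hv k) ?_
    intro k i x _
    rw [norm_iteratedFDeriv_eq_norm_iteratedDeriv]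
    exact h k i x
  · intro k
    induction k with
    | zero => simp
    | succ k ih =>
      rw [iteratedDeriv_succ, ih]
      rw [deriv_tsum (hv (k+1)) (y₀ := 0)]
      · simp only [iteratedDeriv_succ]
      · intro i
        exact (hA i).differentiable_iteratedDeriv k (by exact_mod_cast ENat.natCast_lt_top k)
      · intro i y
        rw [← iteratedDeriv_succ]
        exact h (k+1) i y
      · exact Summable.of_norm_bounded (hv k) (fun i => h k i 0)

lemma aux_phi (n : ℕ) (δ : ℝ) (hδ : 0 < δ) : ∃ φ : ℝ → ℝ, ContDiff ℝ (⊤ : ℕ∞) φ ∧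
    (∀ k, ∃ P, ∀ t, |iteratedDeriv k φ t| ≤ P) ∧
    (∀ k < n, ∀ t, |iteratedDeriv k φ t| ≤ δ) ∧
    ∀ k, iteratedDeriv k φ 0 = if k = n then 1 else 0 := by
  obtain ⟨χ, hχ⟩ : ∃ χ : ContDiffBump (0:ℝ), True := ⟨default, trivial⟩
  set ψ : ℝ → ℝ := fun t => (t ^ n / n.factorial) * χ t with hψ
  have hψs : ContDiff ℝ (⊤ : ℕ∞) ψ := by
    have : ContDiff ℝ (⊤ : ℕ∞) (fun t => χ t) := χ.contDiff
    fun_prop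
  have hψc : HasCompactSupport ψ := χ.hasCompactSupport.mul_left
  have hb : ∀ k, ∃ P, ∀ t, |iteratedDeriv k ψ t| ≤ P := by
    intro k
    have hc : HasCompactSupport (iteratedDeriv k ψ) := by
      clear_value ψ
      clear hψ hψs
      induction k with
      | zero => simpa using hψc
      | succ k ih => rw [iteratedDeriv_succ]; exact ih.deriv
    obtain ⟨P, hP⟩ := (hc).exists_bound_of_continuous
      (hψs.continuous_iteratedDeriv k (by exact_mod_cast le_top))
    exact ⟨P, hP⟩
  have h0 : ∀ k, iteratedDeriv k ψ 0 = if k = n then 1 else 0 := by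
    intro k
    have e : ψ =ᶠ[nhds 0] fun t => (1 / (n.factorial : ℝ)) * t ^ n := by
      filter_upwards [χ.eventuallyEq_one] with t ht
      simp only [hψ, ht, Pi.one_apply]
      ring
    rw [e.iteratedDeriv_eq, iteratedDeriv_const_mul_field, iteratedDeriv_fun_pow_zero]
    split_ifs with h1 <;> first | (field_simp; done) | simp_all
  choose P hP using hb
  set Q : ℝ := 1 + ∑ k ∈ Finset.range n, |P k| with hQ
  have hQ0 : 0 < Q := by positivity
  set ε : ℝ := min 1 (δ / Q) with hε
  have hε0 : 0 < ε := by positivity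
  have hε1 : ε ≤ 1 := min_le_left _ _
  have hεQ : ε * Q ≤ δ := by
    have : ε ≤ δ / Q := min_le_right _ _
    rwa [le_div_iff₀ hQ0] at this
  have hit : ∀ k t, iteratedDeriv k (fun t => ε ^ n * ψ (ε⁻¹ * t)) t
      = ε ^ n * ((ε⁻¹) ^ k * iteratedDeriv k ψ (ε⁻¹ * t)) := by
    intro k t
    rw [iteratedDeriv_const_mul_field,
      iteratedDeriv_comp_const_mul (hψs.of_le (by exact_mod_cast le_top))]
  refine ⟨fun t => ε ^ n * ψ (ε⁻¹ * t), ?_, ?_, ?_, ?_⟩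
  · fun_prop
  · intro k
    refine ⟨ε ^ n * ((ε⁻¹) ^ k * P k), fun t => ?_⟩
    rw [hit, abs_mul, abs_mul, abs_of_pos (pow_pos hε0 n),
      abs_of_pos (pow_pos (inv_pos.2 hε0) k)]
    gcongr
    exact hP k _
  · intro k hk t
    rw [hit, abs_mul, abs_mul, abs_of_pos (pow_pos hε0 n),
      abs_of_pos (pow_pos (inv_pos.2 hε0) k)]
    have h1 : |iteratedDeriv k ψ (ε⁻¹ * t)| ≤ Q := by
      refine (hP k _).trans ((le_abs_self _).trans ?_)
      have := Finset.single_le_sum (f := fun k => |P k|) (fun i _ => abs_nonneg _)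
        (Finset.mem_range.2 hk)
      linarith
    have h2 : ε ^ n * (ε⁻¹) ^ k ≤ ε := by
      have : ε ^ n * (ε⁻¹) ^ k = ε ^ (n - k) := by
        rw [inv_pow, pow_sub₀ _ hε0.ne' hk.le]
      rw [this]
      exact pow_le_of_le_one hε0.le hε1 (by omega)
    calc _ = (ε ^ n * (ε⁻¹) ^ k) * |iteratedDeriv k ψ (ε⁻¹ * t)| := by ring
      _ ≤ ε * Q := by gcongr
      _ ≤ δ := hεQ
  · intro k
    rw [hit, mul_zero, h0]
    split_ifs with h
    · subst h
      rw [mul_one, ← mul_pow, mul_inv_cancel₀ hε0.ne', one_pow]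
    · simp

/-- Borel's lemma with uniform control -/
lemma aux_borel (c : ℕ → ℝ) : ∃ K : ℕ → ℝ, ∀ d : ℕ → ℝ, (∀ n, |d n| ≤ c n) →
    ∃ B : ℝ → ℝ, ContDiff ℝ (⊤ : ℕ∞) B ∧ (∀ k, iteratedDeriv k B 0 = d k) ∧
      ∀ k t, |iteratedDeriv k B t| ≤ K k := by
  have hpos : ∀ n, 0 < (1/2:ℝ)^n / (|c n| + 1) := fun n => by positivity
  choose φ hφs hφb hφδ hφ0 using fun n => aux_phi n _ (hpos n)
  choose P hP using hφb
  set w : ℕ → ℕ → ℝ := fun k n => if k < n then (1/2:ℝ)^n else |c n| * P n k with hw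
  have hsum : ∀ k, Summable (w k) := by
    intro k
    refine Summable.of_norm_bounded_eventually_nat (g := fun n => (1/2:ℝ)^n)
      summable_geometric_two ?_
    filter_upwards [Filter.eventually_gt_atTop k] with n hn
    simp [hw, hn]
  refine ⟨fun k => ∑' n, w k n, fun d hd => ?_⟩
  have hbd : ∀ k n t, |iteratedDeriv k (fun t => d n * φ n t) t| ≤ w k n := by
    intro k n t
    rw [iteratedDeriv_const_mul_field, abs_mul]
    have hdn : |d n| ≤ |c n| := (hd n).trans (le_abs_self _)
    simp only [hw]
    split_ifs with h
    · have := hφδ n k h t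
      calc |d n| * |iteratedDeriv k (φ n) t| ≤ |c n| * ((1/2:ℝ)^n / (|c n| + 1)) := by gcongr
        _ = (1/2:ℝ)^n * (|c n| / (|c n| + 1)) := by ring
        _ ≤ (1/2:ℝ)^n * 1 := by
          gcongr
          rw [div_le_one (by positivity)]
          linarith
        _ = _ := mul_one _
    · have := hP n k t
      gcongr
  obtain ⟨h1, h2⟩ := aux_series (fun n t => d n * φ n t) (fun n => by have := hφs n; fun_prop) w
    hsum hbd
  refine ⟨_, h1, ?_, ?_⟩
  · intro k
    rw [h2]
    simp only [iteratedDeriv_const_mul_field, hφ0]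
    rw [tsum_eq_single k]
    · simp
    · intro n hn
      simp [hn.symm]
  · intro k t
    rw [h2]
    exact tsum_of_norm_bounded (f := fun n => iteratedDeriv k (fun t => d n * φ n t) t)
      (hsum k).hasSum (fun n => hbd k n t)

lemma aux_glue (h : ℝ → ℝ) (hh : ContDiff ℝ (⊤ : ℕ∞) h) (h0 : ∀ n, iteratedDeriv n h 0 = 0) :
    ContDiff ℝ (⊤ : ℕ∞) (fun t => if t ≤ 0 then h t else 0) ∧
    ∀ n t, iteratedDeriv n (fun t => if t ≤ 0 then h t else 0) t =
      if t ≤ 0 then iteratedDeriv n h t else 0 := by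
  have key : ∀ n t, HasDerivAt (fun t => if t ≤ 0 then iteratedDeriv n h t else 0)
      (if t ≤ 0 then iteratedDeriv (n+1) h t else 0) t := by
    intro n t
    have hd : HasDerivAt (iteratedDeriv n h) (iteratedDeriv (n+1) h t) t := by
      rw [iteratedDeriv_succ]
      exact (hh.differentiable_iteratedDeriv n (by exact_mod_cast ENat.natCast_lt_top n)
        t).hasDerivAt
    rcases lt_trichotomy t 0 with ht | ht | ht
    · rw [if_pos ht.le]
      refine hd.congr_of_eventuallyEq ?_
      filter_upwards [Iio_mem_nhds ht] with y hy
      rw [if_pos (le_of_lt hy)]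
    · subst ht
      rw [h0] at hd
      simp only [le_refl, if_true, h0]
      rw [hasDerivAt_iff_isLittleO] at hd ⊢
      simp only [h0, le_refl, if_true, smul_zero, sub_zero] at hd ⊢
      refine Asymptotics.IsBigO.trans_isLittleO ?_ hd
      refine Asymptotics.IsBigO.of_bound 1 (Filter.Eventually.of_forall fun y => ?_)
      split_ifs <;> simp
    · rw [if_neg (not_le.2 ht)]
      refine (hasDerivAt_const t (0:ℝ)).congr_of_eventuallyEq ?_
      filter_upwards [Ioi_mem_nhds ht] with y hy
      rw [if_neg (not_le.2 hy)]
  have it : ∀ n, iteratedDeriv n (fun t => if t ≤ 0 then h t else 0) =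
      fun t => if t ≤ 0 then iteratedDeriv n h t else 0 := by
    intro n
    induction n with
    | zero => simp
    | succ n ih =>
      rw [iteratedDeriv_succ, ih]
      funext t
      exact (key n t).deriv
  refine ⟨?_, fun n t => congrFun (it n) t⟩
  apply contDiff_of_differentiable_iteratedDeriv
  intro m _
  rw [it]
  exact fun t => (key m t).differentiableAt

lemma aux_ext1 (c : ℕ → ℝ) : ∃ K : ℕ → ℝ, ∀ f : ℝ → ℝ, ContDiff ℝ (⊤ : ℕ∞) f →
    (∀ n, |iteratedDeriv n f 0| ≤ c n) →
    ∃ F : ℝ → ℝ, ContDiff ℝ (⊤ : ℕ∞) F ∧ (∀ n, ∀ t ≤ 0, iteratedDeriv n F t = iteratedDeriv n f t) ∧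
      ∀ n, ∀ t > 0, |iteratedDeriv n F t| ≤ K n := by
  obtain ⟨K, hK⟩ := aux_borel c
  refine ⟨K, fun f hf hfc => ?_⟩
  obtain ⟨B, hB, hB0, hBK⟩ := hK (fun n => iteratedDeriv n f 0) hfc
  have hn : ∀ n : ℕ, ((n:ℕ∞) : WithTop ℕ∞) ≤ ((⊤:ℕ∞) : WithTop ℕ∞) := fun n => by
    exact_mod_cast le_top
  have hsub : ∀ n t, iteratedDeriv n (fun t => f t - B t) t
      = iteratedDeriv n f t - iteratedDeriv n B t := fun n t =>
    iteratedDeriv_sub (hf.of_le (hn n)).contDiffAt (hB.of_le (hn n)).contDiffAt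
  obtain ⟨h1, h2⟩ := aux_glue (fun t => f t - B t) (hf.sub hB) (fun n => by rw [hsub, hB0, sub_self])
  have hadd : ∀ n t, iteratedDeriv n (fun t => (if t ≤ 0 then f t - B t else 0) + B t) t
      = (if t ≤ 0 then iteratedDeriv n f t - iteratedDeriv n B t else 0)
        + iteratedDeriv n B t := fun n t => by
    rw [← hsub, ← h2]
    exact iteratedDeriv_add (h1.of_le (hn n)).contDiffAt (hB.of_le (hn n)).contDiffAt
  refine ⟨_, h1.add hB, ?_, ?_⟩
  · intro n t ht
    rw [hadd, if_pos ht]; ring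
  · intro n t ht
    rw [hadd, if_neg (not_le.2 ht), zero_add]
    exact hBK n t

lemma aux_ext (p q : ℝ) (hpq : p ≤ q) (c : ℕ → ℝ) : ∃ K : ℕ → ℝ, ∀ f : ℝ → ℝ,
    ContDiff ℝ (⊤ : ℕ∞) f →
    (∀ n, ∀ t ∈ Set.Icc p q, |iteratedDeriv n f t| ≤ c n) →
    ∃ F : ℝ → ℝ, ContDiff ℝ (⊤ : ℕ∞) F ∧
      (∀ n, ∀ t ∈ Set.Icc p q, iteratedDeriv n F t = iteratedDeriv n f t) ∧
      ∀ n t, |iteratedDeriv n F t| ≤ K n := by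
  obtain ⟨K, hK⟩ := aux_ext1 c
  refine ⟨fun n => max (K n) (c n), fun f hf hfc => ?_⟩
  obtain ⟨F1, hF1, hF1e, hF1b⟩ := hK (fun t => f (q + t)) (by fun_prop) (fun n => by
    rw [iteratedDeriv_comp_const_add]
    exact hfc n _ (by simpa using hpq))
  simp only [iteratedDeriv_comp_const_add] at hF1e
  -- reflect
  have hrefl : ∀ n t, iteratedDeriv n (fun t => F1 (p - q - t)) t
      = (-1) ^ n * iteratedDeriv n F1 (p - q - t) := by
    intro n t
    rw [iteratedDeriv_comp_const_sub]; simp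
  obtain ⟨F2, hF2, hF2e, hF2b⟩ := hK (fun t => F1 (p - q - t)) (by fun_prop) (fun n => by
    rw [hrefl, abs_mul, abs_pow, abs_neg, abs_one, one_pow, one_mul, sub_zero,
      hF1e n _ (by linarith)]
    exact hfc n _ (by simpa using hpq))
  have hit : ∀ n t, iteratedDeriv n (fun t => F2 (p - t)) t
      = (-1) ^ n * iteratedDeriv n F2 (p - t) := by
    intro n t
    rw [iteratedDeriv_comp_const_sub]; simp
  have hsq : ∀ n : ℕ, (-1:ℝ)^n * (-1)^n = 1 := fun n => by
    rw [← mul_pow]; simp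
  refine ⟨fun t => F2 (p - t), by fun_prop, ?_, ?_⟩
  · intro n t ht
    rw [hit, hF2e n _ (by linarith [ht.1]), hrefl, ← mul_assoc, hsq, one_mul,
      hF1e n _ (by linarith [ht.2])]
    congr 1; ring
  · intro n t
    rw [hit, abs_mul, abs_pow, abs_neg, abs_one, one_pow, one_mul]
    rcases le_or_gt (p - t) 0 with h | h
    · rw [hF2e n _ h, hrefl, abs_mul, abs_pow, abs_neg, abs_one, one_pow, one_mul]
      rcases le_or_gt (p - q - (p - t)) 0 with h' | h'
      · rw [hF1e n _ h']
        exact (hfc n _ ⟨by linarith, by linarith⟩).trans (le_max_right _ _)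
      · exact (hF1b n _ h').trans (le_max_left _ _)
    · exact (hF2b n _ h).trans (le_max_left _ _)

lemma aux_int (f f' : ℝ → ℝ) (x₀ : ℝ) (hx₀ : x₀ ≤ 0) (m : ℕ) (hf : ∀ x, HasDerivAt f (f' x) x)
    (h0 : f 0 = 0)
    (hb : ∀ x ∈ Set.Icc x₀ 0, |f' x| ≤ |x| ^ m / m.factorial) :
    |f x₀| ≤ |x₀| ^ (m+1) / (m+1).factorial := by
  have hneg : ∀ x, HasDerivAt (fun x => f (-x)) (-f' (-x)) x := by
    intro x
    have := (hf (-x)).scomp x (hasDerivAt_neg x)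
    simpa [Function.comp_def] using this
  have hB : ∀ x : ℝ, HasDerivAt (fun x : ℝ => x ^ (m+1) / (m+1).factorial)
      (x ^ m / m.factorial) x := by
    intro x
    have := (hasDerivAt_pow (m+1) x).div_const ((m+1).factorial : ℝ)
    refine this.congr_deriv ?_
    rw [Nat.factorial_succ]
    have : (m.factorial : ℝ) ≠ 0 := by positivity
    push_cast
    have : (m:ℝ) + 1 ≠ 0 := by positivity
    field_simp
  have := image_norm_le_of_norm_deriv_right_le_deriv_boundary (a := 0) (b := -x₀)
    (f := fun x => f (-x)) (f' := fun x => -f' (-x))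
    (fun x _ => (hneg x).continuousAt.continuousWithinAt)
    (fun x _ => (hneg x).hasDerivWithinAt) (B := fun x : ℝ => x ^ (m+1) / (m+1).factorial)
    (by simp [h0]) hB (by
      intro x hx
      have := hb (-x) ⟨by linarith [hx.2], by linarith [hx.1]⟩
      rw [abs_neg, abs_of_nonneg hx.1] at this
      simpa using this) (x := -x₀) ⟨by linarith, le_rfl⟩
  rw [abs_of_nonpos hx₀]
  simpa using this

lemma aux_osc (a : ℝ) (ha : 0 ≤ a) (u : ℝ → ℝ) (hu : ContDiff ℝ (⊤ : ℕ∞) u) (h0 : u 0 = 0)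
    (h1 : deriv u 0 = 0) (m : ℕ)
    (hb : ∀ x ∈ Set.Icc (-1:ℝ) 0, |deriv (deriv u) x + a * u x| ≤ |x| ^ m / m.factorial) :
    (∀ x ∈ Set.Icc (-1:ℝ) 0, |deriv u x| ≤ |x| ^ (m+1) / (m+1).factorial) ∧
    ∀ x ∈ Set.Icc (-1:ℝ) 0, |u x| ≤ |x| ^ (m+2) / (m+2).factorial := by
  have d0 : ∀ x, HasDerivAt u (deriv u x) x := fun x =>
    (hu.differentiable (by simp) x).hasDerivAt
  have hu' : ContDiff ℝ (⊤ : ℕ∞) (deriv u) := ContDiff.deriv' (hu.of_le (by simp))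
  have d1 : ∀ x, HasDerivAt (deriv u) (deriv (deriv u) x) x := fun x =>
    (hu'.differentiable (by simp) x).hasDerivAt
  have A : ∀ x ∈ Set.Icc (-1:ℝ) 0, |deriv u x| ≤ |x| ^ (m+1) / (m+1).factorial := by
    intro x₀ hx₀
    obtain ⟨w, hw⟩ : ∃ w : ℝ, w * w = a := ⟨√a, Real.mul_self_sqrt ha⟩
    have hW : ∀ y, HasDerivAt
        (fun y => deriv u y * Real.cos (w * (x₀ - y)) - w * u y * Real.sin (w * (x₀ - y)))
        ((deriv (deriv u) y + a * u y) * Real.cos (w * (x₀ - y))) y := by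
      intro y
      have l : HasDerivAt (fun y => w * (x₀ - y)) (w * (-1)) y :=
        ((hasDerivAt_id y).const_sub x₀).const_mul w
      have := ((d1 y).mul l.cos).sub (((d0 y).const_mul w).mul l.sin)
      refine this.congr_deriv ?_
      rw [← hw]; ring
    have := aux_int _ _ x₀ hx₀.2 m hW (by simp [h0, h1]) (by
      intro x hx
      rw [abs_mul]
      calc _ ≤ |deriv (deriv u) x + a * u x| * 1 := by
            gcongr
            exact Real.abs_cos_le_one _
        _ ≤ _ := by
          rw [mul_one]
          exact hb x ⟨hx₀.1.trans hx.1, hx.2⟩)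
    simpa using this
  refine ⟨A, fun x hx => ?_⟩
  exact aux_int u (deriv u) x hx.2 (m+1) d0 h0 (fun y hy => A y ⟨hx.1.trans hy.1, hy.2⟩)

lemma aux_zero (h : ℝ → ℝ) (hh : ContDiff ℝ (⊤ : ℕ∞) h) (h0 : ∀ x ∈ Set.Icc (-1:ℝ) 0, h x = 0)
    (n : ℕ) : ∀ x ∈ Set.Icc (-1:ℝ) 0, iteratedDeriv n h x = 0 := by
  intro x hx
  have hn : ((n:ℕ∞) : WithTop ℕ∞) ≤ ((⊤:ℕ∞) : WithTop ℕ∞) := by exact_mod_cast le_top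
  rw [← iteratedDerivWithin_eq_iteratedDeriv (uniqueDiffOn_Icc (by norm_num))
    (hh.of_le hn).contDiffAt hx, iteratedDerivWithin_congr (g := fun _ => 0) h0 hx]
  simp

/-- differentiating the equation -/
lemma aux_diffode (a : ℝ) (u r : ℝ → ℝ) (hu : ContDiff ℝ (⊤ : ℕ∞) u) (hr : ContDiff ℝ (⊤ : ℕ∞) r)
    (h : ∀ x ∈ Set.Icc (-1:ℝ) 0, deriv^[3] u x + a * deriv u x = - r x) (n : ℕ) :
    ∀ x ∈ Set.Icc (-1:ℝ) 0, iteratedDeriv (n+3) u x =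
      - a * iteratedDeriv (n+1) u x - iteratedDeriv n r x := by
  intro x hx
  have hn : ((n:ℕ∞) : WithTop ℕ∞) ≤ ((⊤:ℕ∞) : WithTop ℕ∞) := by exact_mod_cast le_top
  have hu1 : ContDiff ℝ (⊤ : ℕ∞) (deriv u) := ContDiff.deriv' (hu.of_le (by simp))
  have hu2 : ContDiff ℝ (⊤ : ℕ∞) (deriv (deriv u)) := ContDiff.deriv' (hu1.of_le (by simp))
  have hu3 : ContDiff ℝ (⊤ : ℕ∞) (deriv (deriv (deriv u))) :=
    ContDiff.deriv' (hu2.of_le (by simp))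
  have hau : ContDiff ℝ (⊤ : ℕ∞) (fun x => a * deriv u x) := by fun_prop
  have h12 : ContDiff ℝ (⊤ : ℕ∞) (deriv (deriv (deriv u)) + (fun x => a * deriv u x)) := hu3.add hau
  have := aux_zero (deriv (deriv (deriv u)) + (fun x => a * deriv u x) + r)
    (h12.add hr) (fun x hx => by
      have := h x hx
      simp only [Function.iterate_succ, Function.iterate_zero, Function.comp_apply, id] at this
      simp only [Pi.add_apply]
      linarith) n x hx
  rw [iteratedDeriv_add (h12.of_le hn).contDiffAt (hr.of_le hn).contDiffAt,
    iteratedDeriv_add (hu3.of_le hn).contDiffAt (hau.of_le hn).contDiffAt,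
    iteratedDeriv_const_mul_field] at this
  rw [show n + 3 = n + 1 + 1 + 1 by ring, iteratedDeriv_succ', iteratedDeriv_succ',
    iteratedDeriv_succ', iteratedDeriv_succ']
  linarith

lemma aux_dF (a : ℝ) (u : ℝ → ℝ) (hu : ContDiff ℝ (⊤ : ℕ∞) u) (x : ℝ) :
    HasDerivAt (fun x => deriv (deriv u) x + a * u x) (deriv^[3] u x + a * deriv u x) x := by
  have d0 : ∀ x, HasDerivAt u (deriv u x) x := fun x =>
    (hu.differentiable (by simp) x).hasDerivAt
  have hu' : ContDiff ℝ (⊤ : ℕ∞) (deriv u) := ContDiff.deriv' (hu.of_le (by simp))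
  have hu'' : ContDiff ℝ (⊤ : ℕ∞) (deriv (deriv u)) := ContDiff.deriv' (hu'.of_le (by simp))
  have d2 : ∀ x, HasDerivAt (deriv (deriv u)) (deriv^[3] u x) x := fun x =>
    (hu''.differentiable (by simp) x).hasDerivAt
  exact (d2 x).add ((d0 x).const_mul a)

lemma aux_F (a : ℝ) (ha : 0 ≤ a) (g : ℕ → ℝ → ℝ)
    (hsmooth : ∀ i, ContDiff ℝ (⊤ : ℕ∞) (g i))
    (hode0 : ∀ x ∈ Set.Icc (-1 : ℝ) 0, deriv^[3] (g 0) x + a * deriv (g 0) x = 0)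
    (hic00 : g 0 0 = 0) (hic01 : deriv (g 0) 0 = 0) (hic02 : deriv^[2] (g 0) 0 = 1)
    (hode : ∀ i : ℕ, ∀ x ∈ Set.Icc (-1 : ℝ) 0,
      deriv^[3] (g (i + 1)) x + a * deriv (g (i + 1)) x = - g i x)
    (hic0 : ∀ i : ℕ, g (i + 1) 0 = 0) (hic1 : ∀ i : ℕ, deriv (g (i + 1)) 0 = 0)
    (hic2 : ∀ i : ℕ, deriv^[2] (g (i + 1)) 0 = 0) (i : ℕ) : ∀ x ∈ Set.Icc (-1:ℝ) 0,
    |deriv (deriv (g i)) x + a * g i x| ≤ |x| ^ (3*i) / (3*i).factorial := by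
  induction i with
  | zero =>
    intro x hx
    have hc : ∀ y ∈ Set.Icc (-1:ℝ) 0, deriv (deriv (g 0)) y + a * g 0 y = 
        deriv (deriv (g 0)) (-1) + a * g 0 (-1) := by
      refine constant_of_has_deriv_right_zero
        (f := fun x => deriv (deriv (g 0)) x + a * g 0 x) ?_ ?_
      · exact fun x _ => (aux_dF a _ (hsmooth 0) x).continuousAt.continuousWithinAt
      · intro x hx
        have := aux_dF a _ (hsmooth 0) x
        rw [hode0 x ⟨hx.1, hx.2.le⟩] at this
        exact this.hasDerivWithinAt
    have h1 := hc 0 (by simp)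
    have h2 : deriv (deriv (g 0)) 0 = 1 := hic02
    rw [hc x hx, ← h1, h2, hic00]
    simp
  | succ i ih =>
    have hg := (aux_osc a ha (g i) (hsmooth i) (by cases i; exacts [hic00, hic0 _])
      (by cases i; exacts [hic01, hic1 _]) (3*i) ih).2
    intro x hx
    have h2 : deriv (deriv (g (i+1))) 0 = 0 := hic2 i
    exact aux_int _ _ x hx.2 (3*i+2) (aux_dF a _ (hsmooth (i+1)))
      (by simp [h2, hic0]) (fun y hy => by
        have hy' : y ∈ Set.Icc (-1:ℝ) 0 := ⟨hx.1.trans hy.1, hy.2⟩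
        rw [hode i y hy', abs_neg]
        exact hg y hy')

lemma aux_rec (a : ℝ) (ha : 0 ≤ a) (g : ℕ → ℝ → ℝ)
    (hsmooth : ∀ i, ContDiff ℝ (⊤ : ℕ∞) (g i))
    (hode0 : ∀ x ∈ Set.Icc (-1 : ℝ) 0, deriv^[3] (g 0) x + a * deriv (g 0) x = 0)
    (hic00 : g 0 0 = 0) (hic01 : deriv (g 0) 0 = 0) (hic02 : deriv^[2] (g 0) 0 = 1)
    (hode : ∀ i : ℕ, ∀ x ∈ Set.Icc (-1 : ℝ) 0,
      deriv^[3] (g (i + 1)) x + a * deriv (g (i + 1)) x = - g i x)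
    (hic0 : ∀ i : ℕ, g (i + 1) 0 = 0) (hic1 : ∀ i : ℕ, deriv (g (i + 1)) 0 = 0)
    (hic2 : ∀ i : ℕ, deriv^[2] (g (i + 1)) 0 = 0) (i n : ℕ) : ∀ x ∈ Set.Icc (-1:ℝ) 0,
    |iteratedDeriv n (g i) x| ≤ (1+a)^n / (3*i+2-n).factorial := by
  induction n using Nat.strong_induction_on generalizing i with
  | _ n ih =>
  have hF := aux_F a ha g hsmooth hode0 hic00 hic01 hic02 hode hic0 hic1 hic2 i
  obtain ⟨hg1, hg0⟩ := aux_osc a ha (g i) (hsmooth i) (by cases i; exacts [hic00, hic0 _])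
      (by cases i; exacts [hic01, hic1 _]) (3*i) hF
  have hp : ∀ x ∈ Set.Icc (-1:ℝ) 0, ∀ m : ℕ, |x|^m / m.factorial ≤ 1 / m.factorial := by
    intro x hx m
    gcongr
    exact pow_le_one₀ (abs_nonneg _) (abs_le.2 ⟨hx.1, by linarith [hx.2]⟩)
  intro x hx
  match n, ih with
  | 0, _ => simpa using (hg0 x hx).trans (hp x hx _)
  | 1, _ =>
    have := (hg1 x hx).trans (hp x hx _)
    rw [iteratedDeriv_one, pow_one, show 3*i+2-1 = 3*i+1 by omega]
    refine this.trans ?_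
    gcongr
    linarith
  | 2, _ =>
    have h1 := (hF x hx).trans (hp x hx _)
    have h2 := (hg0 x hx).trans (hp x hx _)
    have h3 : (1:ℝ) / (3*i+2).factorial ≤ 1 / (3*i).factorial := by
      gcongr
      omega
    rw [iteratedDeriv_succ, iteratedDeriv_one, show 3*i+2-2 = 3*i by omega]
    calc |deriv (deriv (g i)) x|
        = |(deriv (deriv (g i)) x + a * g i x) - a * g i x| := by congr 1; ring
      _ ≤ |deriv (deriv (g i)) x + a * g i x| + |a * g i x| := abs_sub _ _
      _ ≤ 1 / (3*i).factorial + a * (1 / (3*i).factorial) := by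
        rw [abs_mul, abs_of_nonneg ha]
        gcongr
        exact h2.trans h3
      _ = (1+a) * (1 / (3*i).factorial) := by ring
      _ ≤ (1+a)^2 * (1 / (3*i).factorial) := by
        gcongr
        nlinarith
      _ = _ := by ring
  | n+3, ih =>
    have hk : ((1:ℝ)+a)^(n+3) = (1+a)^n * (1+a)^3 := by ring
    have i1 : |a * iteratedDeriv (n+1) (g i) x| ≤ a * ((1+a)^(n+1) / (3*i+2-(n+3)).factorial) := by
      rw [abs_mul, abs_of_nonneg ha]
      gcongr
      refine (ih (n+1) (by omega) i x hx).trans ?_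
      gcongr
      omega
    have hX : 0 ≤ (1+a)^n / ((3*i+2-(n+3)).factorial : ℝ) := by positivity
    have fin : a * ((1+a)^(n+1) / (3*i+2-(n+3)).factorial) + (1+a)^n / (3*i+2-(n+3)).factorial
        ≤ (1+a)^(n+3) / (3*i+2-(n+3)).factorial := by
      rw [show a * ((1+a)^(n+1) / (3*i+2-(n+3)).factorial)
        + (1+a)^n / (3*i+2-(n+3)).factorial
        = (1+a)^n / (3*i+2-(n+3)).factorial * (a * (1 + a) + 1) by ring,
        show (1+a)^(n+3) / ((3*i+2-(n+3)).factorial : ℝ)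
        = (1+a)^n / (3*i+2-(n+3)).factorial * (1+a)^3 by ring]
      gcongr
      nlinarith [mul_nonneg ha ha, mul_nonneg ha (mul_nonneg ha ha)]
    cases i with
    | zero =>
      rw [aux_diffode a (g 0) (fun _ => 0) (hsmooth 0) contDiff_const
        (fun x hx => by rw [hode0 x hx]; simp) n x hx]
      simp only [iteratedDeriv_fun_const_zero, sub_zero, neg_mul, abs_neg]
      linarith
    | succ i =>
      rw [aux_diffode a (g (i+1)) (g i) (hsmooth _) (hsmooth _) (hode i) n x hx]
      have i2 := ih n (by omega) i x hx
      rw [show 3*i+2-n = 3*(i+1)+2-(n+3) by omega] at i2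
      have := abs_sub (-a * iteratedDeriv (n+1) (g (i+1)) x) (iteratedDeriv n (g i) x)
      rw [neg_mul, abs_neg] at this
      rw [neg_mul]
      linarith

lemma aux_bddgrowth (W τ : ℝ) (hW : 1 ≤ W) (hτ : 0 < τ) : ∃ C : ℝ, 0 < C ∧ ∀ k : ℕ,
    W ^ k ≤ C * (k.factorial : ℝ) ^ τ := by
  have ht := FloorSemiring.tendsto_pow_div_factorial_atTop (W ^ (1/τ))
  obtain ⟨C, hC⟩ := ht.bddAbove_range
  have hW0 : 0 < W := by linarith
  refine ⟨(max C 1)^τ, by positivity, fun k => ?_⟩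
  have h1 : (W ^ (1/τ)) ^ k / k.factorial ≤ max C 1 :=
    (hC ⟨k, rfl⟩).trans (le_max_left _ _)
  have hk : (0:ℝ) < k.factorial := by positivity
  rw [div_le_iff₀ hk] at h1
  have h2 := Real.rpow_le_rpow (by positivity) h1 hτ.le
  rw [Real.mul_rpow (by positivity) hk.le] at h2
  convert h2 using 1
  rw [← Real.rpow_natCast (W ^ (1/τ)), ← Real.rpow_mul hW0.le, ← Real.rpow_mul hW0.le,
    ← Real.rpow_natCast]
  congr 1
  field_simp

lemma aux_fact3 (i : ℕ) : i.factorial ^ 3 ≤ (3*i+2).factorial := by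
  have h1 := Nat.le_of_dvd (Nat.factorial_pos _) (Nat.factorial_mul_factorial_dvd_factorial_add i i)
  have h2 := Nat.le_of_dvd (Nat.factorial_pos _)
    (Nat.factorial_mul_factorial_dvd_factorial_add (i+i) i)
  calc i.factorial ^ 3 = (i.factorial * i.factorial) * i.factorial := by ring
    _ ≤ (i+i).factorial * i.factorial := by gcongr
    _ ≤ (i+i+i).factorial := h2
    _ ≤ _ := Nat.factorial_le (by omega)

lemma aux_factadd (m n : ℕ) : (m+n).factorial ≤ 2^(m+n) * (m.factorial * n.factorial) := by
  rw [← Nat.add_choose_mul_factorial_mul_factorial m n, mul_assoc]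
  gcongr
  exact Nat.choose_le_two_pow _ _

/-- key termwise estimate -/
lemma aux_term (s : ℝ) (hs1 : 1 ≤ s) (hs3 : s < 3) (Q : ℝ) (hQ : 1 ≤ Q) :
    ∃ C W : ℝ, 0 < C ∧ 1 ≤ W ∧ ∀ i n : ℕ,
      2 ^ i * (Q ^ i * (i.factorial : ℝ) ^ s) / (3*i+2-n).factorial
        ≤ C * W ^ n * (n.factorial : ℝ) ^ (s/3) := by
  obtain ⟨C, hC, hCk⟩ := aux_bddgrowth (16*Q) (1 - s/3) (by linarith) (by linarith)
  refine ⟨4*C, 16*Q, by positivity, by linarith, fun i n => ?_⟩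
  set k := 3*i+2-n with hk
  set σ := s/3 with hσ
  have hσ0 : 0 < σ := by positivity
  have hσ1 : σ < 1 := by rw [hσ]; linarith
  have hkp : (0:ℝ) < k.factorial := by positivity
  have hnp : (0:ℝ) < n.factorial := by positivity
  have e1 : (i.factorial : ℝ) ^ s ≤ ((3*i+2).factorial : ℝ) ^ σ := by
    have : (i.factorial : ℝ) ^ s = ((i.factorial : ℝ)^3) ^ σ := by
      rw [← Real.rpow_natCast, ← Real.rpow_mul (by positivity), hσ]
      congr 1; push_cast; ring
    rw [this]
    gcongr
    exact_mod_cast aux_fact3 i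
  have e2 : (3*i+2).factorial ≤ 2^(3*i+2) * (n.factorial * k.factorial) := by
    rcases le_total n (3*i+2) with h | h
    · have := aux_factadd n k
      rwa [show n + k = 3*i+2 by omega] at this
    · calc (3*i+2).factorial ≤ n.factorial := Nat.factorial_le h
        _ = 1 * (n.factorial * 1) := by ring
        _ ≤ _ := by
          gcongr
          · exact Nat.one_le_two_pow
          · exact Nat.factorial_pos _
  have e3 : ((3*i+2).factorial : ℝ) ^ σ ≤ 2^(3*i+2) * ((n.factorial:ℝ)^σ * (k.factorial:ℝ)^σ) := by
    have e2' : ((3*i+2).factorial : ℝ) ≤ 2^(3*i+2) * (n.factorial * k.factorial) := by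
      exact_mod_cast e2
    calc _ ≤ ((2:ℝ)^(3*i+2) * (n.factorial * k.factorial))^σ := by gcongr
      _ = ((2:ℝ)^(3*i+2))^σ * ((n.factorial:ℝ)^σ * (k.factorial:ℝ)^σ) := by
        rw [Real.mul_rpow (by positivity) (by positivity), Real.mul_rpow hnp.le hkp.le]
      _ ≤ _ := by
        gcongr
        exact Real.rpow_le_self_of_one_le (one_le_pow₀ (by norm_num)) hσ1.le
  have e4 : (16*Q)^i ≤ (16*Q)^n * (16*Q)^k := by
    rw [← pow_add]
    exact pow_le_pow_right₀ (by linarith) (by omega)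
  have e5 : (k.factorial:ℝ)^σ * (k.factorial:ℝ)^(1-σ) = k.factorial := by
    rw [← Real.rpow_add hkp]; simp
  rw [div_le_iff₀ hkp]
  calc 2 ^ i * (Q ^ i * (i.factorial : ℝ) ^ s)
      ≤ 2 ^ i * (Q ^ i * (2^(3*i+2) * ((n.factorial:ℝ)^σ * (k.factorial:ℝ)^σ))) := by
        gcongr
        exact e1.trans e3
    _ = 4 * (16*Q)^i * ((n.factorial:ℝ)^σ * (k.factorial:ℝ)^σ) := by
        rw [pow_add, pow_mul, mul_pow, show (16:ℝ) = 2 * 2^3 by norm_num, mul_pow]; ring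
    _ ≤ 4 * ((16*Q)^n * (C * (k.factorial:ℝ)^(1-σ))) * ((n.factorial:ℝ)^σ * (k.factorial:ℝ)^σ) := by
        gcongr
        refine e4.trans ?_
        gcongr
        exact hCk k
    _ = 4 * C * (16*Q)^n * (n.factorial:ℝ)^σ * ((k.factorial:ℝ)^σ * (k.factorial:ℝ)^(1-σ)) := by ring
    _ = _ := by rw [e5]

lemma aux_two (U V : ℕ → ℝ → ℝ) (hU : ∀ i, ContDiff ℝ (⊤ : ℕ∞) (U i))
    (hV : ∀ i, ContDiff ℝ (⊤ : ℕ∞) (V i)) (K L : ℕ → ℝ)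
    (hK : ∀ i n x, |iteratedDeriv n (U i) x| ≤ K n)
    (hL : ∀ i n x, |iteratedDeriv n (V i) x| ≤ L n) :
    ContDiff ℝ (⊤ : ℕ∞) (fun q : ℝ × ℝ => ∑' i, (1/2:ℝ)^i * (U i q.1 * V i q.2)) ∧
    (∀ m n x t, iteratedDeriv m (fun x' => iteratedDeriv n
        (fun t' => ∑' i, (1/2:ℝ)^i * (U i x' * V i t')) t) x =
      ∑' i, (1/2:ℝ)^i * (iteratedDeriv m (U i) x * iteratedDeriv n (V i) t)) ∧
    ∀ m n x t, Summable fun i =>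
      (1/2:ℝ)^i * (iteratedDeriv m (U i) x * iteratedDeriv n (V i) t) := by
  have hK0 : ∀ n, 0 ≤ K n := fun n => (abs_nonneg _).trans (hK 0 n 0)
  have hL0 : ∀ n, 0 ≤ L n := fun n => (abs_nonneg _).trans (hL 0 n 0)
  have hb : ∀ m n i x t, |(1/2:ℝ)^i * (iteratedDeriv m (U i) x * iteratedDeriv n (V i) t)|
      ≤ (1/2:ℝ)^i * (K m * L n) := by
    intro m n i x t
    rw [abs_mul, abs_mul, abs_of_pos (by positivity : (0:ℝ) < (1/2)^i)]
    have := hK i m x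
    have := hL i n t
    have := hK0 m
    gcongr
  have hsum : ∀ c : ℝ, Summable fun i : ℕ => (1/2:ℝ)^i * c :=
    fun c => summable_geometric_two.mul_right c
  refine ⟨?_, ?_, ?_⟩
  · refine contDiff_tsum (v := fun k i => (1/2:ℝ)^i *
      ∑ j ∈ Finset.range (k+1), (k.choose j : ℝ) * K j * L (k-j)) ?_ (fun k _ => hsum _) ?_
    · intro i
      have := hU i
      have := hV i
      fun_prop
    · intro k i q _
      have hk : ((k:ℕ∞) : WithTop ℕ∞) ≤ ((⊤:ℕ∞) : WithTop ℕ∞) := by exact_mod_cast le_top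
      have hf : ContDiff ℝ (⊤ : ℕ∞) (fun q : ℝ × ℝ => U i q.1) := by
        have := hU i
        fun_prop
      have hg : ContDiff ℝ (⊤ : ℕ∞) (fun q : ℝ × ℝ => V i q.2) := by
        have := hV i
        fun_prop
      have nf : ∀ j : ℕ, ‖iteratedFDeriv ℝ j (fun q : ℝ × ℝ => U i q.1) q‖ ≤ K j := by
        intro j
        have hj : ((j:ℕ∞) : WithTop ℕ∞) ≤ ((⊤:ℕ∞) : WithTop ℕ∞) := by exact_mod_cast le_top
        have e := (ContinuousLinearMap.fst ℝ ℝ ℝ).iteratedFDeriv_comp_right (hU i) q hj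
        have e' : iteratedFDeriv ℝ j (fun q : ℝ × ℝ => U i q.1) q = _ := e
        rw [e']
        refine (ContinuousMultilinearMap.norm_compContinuousLinearMap_le _ _).trans ?_
        rw [norm_iteratedFDeriv_eq_norm_iteratedDeriv]
        have h1 : ∏ _l : Fin j, ‖ContinuousLinearMap.fst ℝ ℝ ℝ‖ ≤ 1 :=
          Finset.prod_le_one (fun _ _ => norm_nonneg _)
            (fun _ _ => ContinuousLinearMap.norm_fst_le ℝ ℝ ℝ)
        calc _ ≤ K j * 1 := mul_le_mul (hK i j _) h1
              (Finset.prod_nonneg fun _ _ => norm_nonneg _) (hK0 j)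
          _ = K j := mul_one _
      have ng : ∀ j : ℕ, ‖iteratedFDeriv ℝ j (fun q : ℝ × ℝ => V i q.2) q‖ ≤ L j := by
        intro j
        have hj : ((j:ℕ∞) : WithTop ℕ∞) ≤ ((⊤:ℕ∞) : WithTop ℕ∞) := by exact_mod_cast le_top
        have e := (ContinuousLinearMap.snd ℝ ℝ ℝ).iteratedFDeriv_comp_right (hV i) q hj
        have e' : iteratedFDeriv ℝ j (fun q : ℝ × ℝ => V i q.2) q = _ := e
        rw [e']
        refine (ContinuousMultilinearMap.norm_compContinuousLinearMap_le _ _).trans ?_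
        rw [norm_iteratedFDeriv_eq_norm_iteratedDeriv]
        have h1 : ∏ _l : Fin j, ‖ContinuousLinearMap.snd ℝ ℝ ℝ‖ ≤ 1 :=
          Finset.prod_le_one (fun _ _ => norm_nonneg _)
            (fun _ _ => ContinuousLinearMap.norm_snd_le ℝ ℝ ℝ)
        calc _ ≤ L j * 1 := mul_le_mul (hL i j _) h1
              (Finset.prod_nonneg fun _ _ => norm_nonneg _) (hL0 j)
          _ = L j := mul_one _
      have e := iteratedFDeriv_const_smul_apply (𝕜 := ℝ) (i := k) (a := (1/2:ℝ)^i)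
        (f := fun q : ℝ × ℝ => U i q.1 * V i q.2) (x := q)
        ((hf.mul hg).of_le hk).contDiffAt
      have e' : iteratedFDeriv ℝ k (fun q : ℝ × ℝ => (1/2:ℝ)^i * (U i q.1 * V i q.2)) q = _ := e
      rw [e', norm_smul, Real.norm_of_nonneg (by positivity)]
      gcongr
      refine (norm_iteratedFDeriv_mul_le hf hg q hk).trans ?_
      gcongr with j hj
      · exact mul_nonneg (by positivity) (hK0 j)
      · exact nf j
      · exact ng _
  · intro m n x t
    have i1 : ∀ x' : ℝ, iteratedDeriv n (fun t' => ∑' i, (1/2:ℝ)^i * (U i x' * V i t')) t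
        = ∑' i, (1/2:ℝ)^i * (U i x' * iteratedDeriv n (V i) t) := by
      intro x'
      have ed : ∀ k i t, iteratedDeriv k (fun t' => (1/2:ℝ)^i * (U i x' * V i t')) t
          = (1/2:ℝ)^i * (U i x' * iteratedDeriv k (V i) t) := by
        intro k i t
        rw [iteratedDeriv_const_mul_field, iteratedDeriv_const_mul_field]
      have := (aux_series (fun i t' => (1/2:ℝ)^i * (U i x' * V i t'))
        (fun i => by have := hV i; fun_prop) (fun k i => (1/2:ℝ)^i * (K 0 * L k))
        (fun k => hsum _) (fun k i t => by
          rw [ed]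
          simpa using hb 0 k i x' t)).2 n
      rw [this]
      simp only [ed]
    simp only [i1]
    have ed : ∀ k i x, iteratedDeriv k
        (fun x' => (1/2:ℝ)^i * (U i x' * iteratedDeriv n (V i) t)) x
        = (1/2:ℝ)^i * (iteratedDeriv k (U i) x * iteratedDeriv n (V i) t) := by
      intro k i x
      rw [iteratedDeriv_const_mul_field, iteratedDeriv_mul_const_field]
    have := (aux_series (fun i x' => (1/2:ℝ)^i * (U i x' * iteratedDeriv n (V i) t))
        (fun i => by have := hU i; fun_prop) (fun k i => (1/2:ℝ)^i * (K k * L n))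
        (fun k => hsum _) (fun k i x => by
          rw [ed]
          exact hb k n i x t)).2 m
    rw [this]
    simp only [ed]
  · intro m n x t
    exact Summable.of_norm_bounded (hsum (K m * L n)) (fun i => hb m n i x t)


/-- flatness property, `1 ≤ s < 3`: if `z ∈ G^s([0,T])` then the series
`y(x,t) = Σ_{i≥0} g_i(x) z^{(i)}(t)` converges, the sum `y` is smooth, Gevrey of order
`s/3` in `x` and `s` in `t` on `[-1,0]×[0,T]`, and solves `∂ₜy + ∂ₓ³y + a∂ₓy = 0`
on `(-1,0)×(0,T)` with `y(0,t) = ∂ₓy(0,t) = 0` and `∂ₓ²y(0,t) = z(t)`. -/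
theorem stmt9 (a : ℝ) (ha : 0 ≤ a) (T : ℝ) (hT : 0 < T) (s : ℝ) (hs1 : 1 ≤ s) (hs3 : s < 3)
    (g : ℕ → ℝ → ℝ)
    (hsmooth : ∀ i, ContDiff ℝ (⊤ : ℕ∞) (g i))
    (hode0 : ∀ x ∈ Set.Icc (-1 : ℝ) 0, deriv^[3] (g 0) x + a * deriv (g 0) x = 0)
    (hic00 : g 0 0 = 0) (hic01 : deriv (g 0) 0 = 0) (hic02 : deriv^[2] (g 0) 0 = 1)
    (hode : ∀ i : ℕ, ∀ x ∈ Set.Icc (-1 : ℝ) 0,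
      deriv^[3] (g (i + 1)) x + a * deriv (g (i + 1)) x = - g i x)
    (hic0 : ∀ i : ℕ, g (i + 1) 0 = 0) (hic1 : ∀ i : ℕ, deriv (g (i + 1)) 0 = 0)
    (hic2 : ∀ i : ℕ, deriv^[2] (g (i + 1)) 0 = 0)
    (z : ℝ → ℝ) (hz : ContDiff ℝ (⊤ : ℕ∞) z) (M R : ℝ) (hM : 0 < M) (hR : 0 < R)
    (hzG : ∀ i : ℕ, ∀ t ∈ Set.Icc (0 : ℝ) T,
      |iteratedDeriv i z t| ≤ M * (Nat.factorial i : ℝ) ^ s / R ^ i) :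
    ∃ y : ℝ → ℝ → ℝ,
      -- convergence of the series defining `y`
      (∀ x ∈ Set.Icc (-1 : ℝ) 0, ∀ t ∈ Set.Icc (0 : ℝ) T,
        HasSum (fun i : ℕ => g i x * iteratedDeriv i z t) (y x t)) ∧
      -- `y` is smooth
      ContDiff ℝ (⊤ : ℕ∞) (fun q : ℝ × ℝ => y q.1 q.2) ∧
      -- Gevrey of order `s/3` in `x` and `s` in `t` on `[-1,0]×[0,T]`
      (∃ C R₁ R₂ : ℝ, 0 < C ∧ 0 < R₁ ∧ 0 < R₂ ∧
        ∀ n₁ n₂ : ℕ, ∀ x ∈ Set.Icc (-1 : ℝ) 0, ∀ t ∈ Set.Icc (0 : ℝ) T,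
          |iteratedDeriv n₁ (fun x' => iteratedDeriv n₂ (fun t' => y x' t') t) x| ≤
            C * (Nat.factorial n₁ : ℝ) ^ (s / 3) * (Nat.factorial n₂ : ℝ) ^ s /
              (R₁ ^ n₁ * R₂ ^ n₂)) ∧
      -- the PDE
      (∀ x ∈ Set.Ioo (-1 : ℝ) 0, ∀ t ∈ Set.Ioo (0 : ℝ) T,
        deriv (fun t' => y x t') t + iteratedDeriv 3 (fun x' => y x' t) x +
          a * deriv (fun x' => y x' t) x = 0) ∧
      -- boundary conditions at `x = 0`
      (∀ t ∈ Set.Ioo (0 : ℝ) T,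
        y 0 t = 0 ∧ deriv (fun x' => y x' t) 0 = 0 ∧
          iteratedDeriv 2 (fun x' => y x' t) 0 = z t) := by
  have hgb := aux_rec a ha g hsmooth hode0 hic00 hic01 hic02 hode hic0 hic1 hic2
  set Q : ℝ := max 1 (2 ^ s / R) with hQ
  have hQ1 : 1 ≤ Q := le_max_left _ _
  have hQ0 : 0 < Q := by linarith
  have hQ2 : 2 ^ s / R ≤ Q := le_max_right _ _
  obtain ⟨C, W, hC, hW, hCW⟩ := aux_term s hs1 hs3 Q hQ1
  have hW0 : 0 < W := by linarith
  set μ : ℕ → ℝ := fun i => Q ^ i * (i.factorial : ℝ) ^ s with hμ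
  have hμ0 : ∀ i, 0 < μ i := fun i => by positivity
  set c : ℕ → ℝ := fun n => C * (W * (1 + a)) ^ n * (n.factorial : ℝ) ^ (s/3) with hc
  set d : ℕ → ℝ := fun n => M * Q ^ n * (n.factorial : ℝ) ^ s with hd
  have hc0 : ∀ n, 0 < c n := fun n => by positivity
  have hd0 : ∀ n, 0 < d n := fun n => by positivity
  have hzs : ∀ i, ContDiff ℝ (⊤ : ℕ∞) (iteratedDeriv i z) := by
    intro i
    induction i with
    | zero => simpa using hz
    | succ i ih => rw [iteratedDeriv_succ]; exact ContDiff.deriv' (ih.of_le (by simp))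
  have hzz : ∀ i n, iteratedDeriv n (iteratedDeriv i z) = iteratedDeriv (i + n) z := by
    intro i n
    rw [iteratedDeriv_eq_iterate, iteratedDeriv_eq_iterate, iteratedDeriv_eq_iterate,
      add_comm i n, Function.iterate_add_apply]
  obtain ⟨K, hK⟩ := aux_ext (-1) 0 (by norm_num) c
  obtain ⟨L, hL⟩ := aux_ext 0 T hT.le d
  have hub : ∀ i n, ∀ x ∈ Set.Icc (-1:ℝ) 0,
      |iteratedDeriv n (fun x => (2 ^ i * μ i) * g i x) x| ≤ c n := by
    intro i n x hx
    rw [iteratedDeriv_const_mul_field, abs_mul, abs_of_pos (mul_pos (by positivity) (hμ0 i))]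
    calc 2 ^ i * μ i * |iteratedDeriv n (g i) x|
        ≤ 2 ^ i * μ i * ((1+a)^n / (3*i+2-n).factorial) := by
          have := hμ0 i
          gcongr
          exact hgb i n x hx
      _ = (2 ^ i * μ i / (3*i+2-n).factorial) * (1+a)^n := by ring
      _ ≤ (C * W ^ n * (n.factorial : ℝ) ^ (s/3)) * (1+a)^n := by
          gcongr
          exact hCW i n
      _ = c n := by simp only [hc, mul_pow]; ring
  have hvb : ∀ i n, ∀ t ∈ Set.Icc (0:ℝ) T,
      |iteratedDeriv n (fun t => (μ i)⁻¹ * iteratedDeriv i z t) t| ≤ d n := by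
    intro i n t ht
    rw [iteratedDeriv_const_mul_field, abs_mul, abs_of_pos (inv_pos.2 (hμ0 i))]
    have e : iteratedDeriv n (fun t => iteratedDeriv i z t) t = iteratedDeriv (i+n) z t :=
      congrFun (hzz i n) t
    rw [e, inv_mul_le_iff₀ (hμ0 i)]
    refine (hzG (i+n) t ht).trans ?_
    have f1 : ((i+n).factorial : ℝ) ≤ 2^(i+n) * (i.factorial * n.factorial) := by
      exact_mod_cast aux_factadd i n
    have f2 : ((i+n).factorial : ℝ)^s ≤
        ((2:ℝ)^s)^(i+n) * ((i.factorial:ℝ)^s * (n.factorial:ℝ)^s) := by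
      calc _ ≤ ((2:ℝ)^(i+n) * (i.factorial * n.factorial))^s := by gcongr
        _ = _ := by
          rw [Real.mul_rpow (by positivity) (by positivity),
            Real.mul_rpow (by positivity) (by positivity), ← Real.rpow_natCast,
            ← Real.rpow_mul (by norm_num), mul_comm ((i+n : ℕ):ℝ) s,
            Real.rpow_mul (by norm_num), Real.rpow_natCast]
    calc M * ((i+n).factorial:ℝ)^s / R^(i+n)
        ≤ M * (((2:ℝ)^s)^(i+n) * ((i.factorial:ℝ)^s * (n.factorial:ℝ)^s)) / R^(i+n) := by gcongr
      _ = M * ((2:ℝ)^s / R)^(i+n) * ((i.factorial:ℝ)^s * (n.factorial:ℝ)^s) := by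
          rw [div_pow]; ring
      _ ≤ M * Q^(i+n) * ((i.factorial:ℝ)^s * (n.factorial:ℝ)^s) := by gcongr
      _ = μ i * d n := by simp only [hμ, hd, pow_add]; ring
  choose U hUs hUe hUb using fun i => hK (fun x => (2 ^ i * μ i) * g i x)
    (by have := hsmooth i; fun_prop) (hub i)
  choose V hVs hVe hVb using fun i => hL (fun t => (μ i)⁻¹ * iteratedDeriv i z t)
    (by have := hzs i; fun_prop) (hvb i)
  obtain ⟨hy, hder, hsm⟩ := aux_two U V hUs hVs K L hUb hVb
  have hterm : ∀ m n i, ∀ x ∈ Set.Icc (-1:ℝ) 0, ∀ t ∈ Set.Icc (0:ℝ) T,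
      (1/2:ℝ)^i * (iteratedDeriv m (U i) x * iteratedDeriv n (V i) t)
        = iteratedDeriv m (g i) x * iteratedDeriv (i+n) z t := by
    intro m n i x hx t ht
    rw [hUe i m x hx, hVe i n t ht, iteratedDeriv_const_mul_field, iteratedDeriv_const_mul_field]
    have e : iteratedDeriv n (fun t => iteratedDeriv i z t) t = iteratedDeriv (i+n) z t :=
      congrFun (hzz i n) t
    rw [e, one_div, inv_pow]
    have := (hμ0 i).ne'
    field_simp
  have hS : ∀ m n, ∀ x ∈ Set.Icc (-1:ℝ) 0, ∀ t ∈ Set.Icc (0:ℝ) T,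
      Summable fun i => iteratedDeriv m (g i) x * iteratedDeriv (i+n) z t := by
    intro m n x hx t ht
    refine (hsm m n x t).congr fun i => ?_
    rw [hterm m n i x hx t ht]
  have hD : ∀ m n, ∀ x ∈ Set.Icc (-1:ℝ) 0, ∀ t ∈ Set.Icc (0:ℝ) T,
      iteratedDeriv m (fun x' => iteratedDeriv n
        (fun t' => ∑' i, (1/2:ℝ)^i * (U i x' * V i t')) t) x =
      ∑' i, iteratedDeriv m (g i) x * iteratedDeriv (i+n) z t := by
    intro m n x hx t ht
    rw [hder]
    exact tsum_congr fun i => hterm m n i x hx t ht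
  have hD0 : ∀ m, ∀ x ∈ Set.Icc (-1:ℝ) 0, ∀ t ∈ Set.Icc (0:ℝ) T,
      iteratedDeriv m (fun x' => ∑' i, (1/2:ℝ)^i * (U i x' * V i t)) x =
      ∑' i, iteratedDeriv m (g i) x * iteratedDeriv i z t := by
    intro m x hx t ht
    have := hD m 0 x hx t ht
    simpa only [iteratedDeriv_zero, add_zero] using this
  have mem0 : (0:ℝ) ∈ Set.Icc (-1:ℝ) 0 := by simp
  refine ⟨fun x t => ∑' i, (1/2:ℝ)^i * (U i x * V i t), ?_, hy, ?_, ?_, ?_⟩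
  · intro x hx t ht
    have h1 := hD0 0 x hx t ht
    have h2 := (hS 0 0 x hx t ht).hasSum
    simp only [iteratedDeriv_zero, add_zero] at h1 h2
    rw [← h1] at h2
    exact h2
  · refine ⟨2 * C * M, (W * (1+a))⁻¹, Q⁻¹, by positivity, by positivity, by positivity, ?_⟩
    intro m n x hx t ht
    simp only [hder]
    have hb : ∀ i, ‖(1/2:ℝ)^i * (iteratedDeriv m (U i) x * iteratedDeriv n (V i) t)‖
        ≤ (1/2:ℝ)^i * (c m * d n) := by
      intro i
      have h1 := hub i m x hx
      have h2 := hvb i n t ht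
      rw [← hUe i m x hx] at h1
      rw [← hVe i n t ht] at h2
      rw [Real.norm_eq_abs, abs_mul, abs_mul, abs_of_pos (by positivity : (0:ℝ) < (1/2)^i)]
      have := hc0 m
      gcongr
    have h3 := tsum_of_norm_bounded (hasSum_geometric_two.mul_right (c m * d n)) hb
    rw [Real.norm_eq_abs] at h3
    refine h3.trans (le_of_eq ?_)
    simp only [hc, hd, inv_pow]
    field_simp
  · intro x hx t ht
    have hx' : x ∈ Set.Icc (-1:ℝ) 0 := Set.Ioo_subset_Icc_self hx
    have ht' : t ∈ Set.Icc (0:ℝ) T := Set.Ioo_subset_Icc_self ht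
    have e1 := hD 0 1 x hx' t ht'
    have e2 := hD0 3 x hx' t ht'
    have e3 := hD0 1 x hx' t ht'
    have s1 := hS 0 1 x hx' t ht'
    have s2 := hS 3 0 x hx' t ht'
    have s3 := hS 1 0 x hx' t ht'
    simp only [iteratedDeriv_zero, iteratedDeriv_one, add_zero] at e1 e2 e3 s1 s2 s3
    have e1' : deriv (fun t' => ∑' i, (1/2:ℝ)^i * (U i x * V i t')) t
      = ∑' i, g i x * iteratedDeriv (i+1) z t := e1
    have e3' : deriv (fun x' => ∑' i, (1/2:ℝ)^i * (U i x' * V i t)) x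
      = ∑' i, deriv (g i) x * iteratedDeriv i z t := e3
    simp only [e1', e2, e3']
    rw [← tsum_mul_left, add_assoc, ← s2.tsum_add (s3.mul_left a),
      (s2.add (s3.mul_left a)).tsum_eq_zero_add]
    have z0 : iteratedDeriv 3 (g 0) x * iteratedDeriv 0 z t
        + a * (deriv (g 0) x * iteratedDeriv 0 z t) = 0 := by
      have := hode0 x hx'
      rw [← iteratedDeriv_eq_iterate] at this
      rw [← mul_assoc, ← add_mul, this, zero_mul]
    have zi : ∀ i, iteratedDeriv 3 (g (i+1)) x * iteratedDeriv (i+1) z t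
        + a * (deriv (g (i+1)) x * iteratedDeriv (i+1) z t)
        = -(g i x * iteratedDeriv (i+1) z t) := by
      intro i
      have := hode i x hx'
      rw [← iteratedDeriv_eq_iterate] at this
      rw [← mul_assoc, ← add_mul, this, neg_mul]
    simp only [z0, zi, tsum_neg]
    ring
  · intro t ht
    have ht' : t ∈ Set.Icc (0:ℝ) T := Set.Ioo_subset_Icc_self ht
    have e0 := hD0 0 0 mem0 t ht'
    have e1 := hD0 1 0 mem0 t ht'
    have e2 := hD0 2 0 mem0 t ht'
    have a0 : ∀ i, g i 0 = 0 := fun i => by cases i; exacts [hic00, hic0 _]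
    have a1 : ∀ i, deriv (g i) 0 = 0 := fun i => by cases i; exacts [hic01, hic1 _]
    simp only [iteratedDeriv_zero, iteratedDeriv_one, a0, a1, zero_mul, tsum_zero] at e0 e1
    refine ⟨e0, e1, e2.trans ?_⟩
    rw [tsum_eq_single 0]
    · rw [iteratedDeriv_eq_iterate, hic02]; simp
    · intro i hi
      obtain ⟨j, rfl⟩ := Nat.exists_eq_succ_of_ne_zero hi
      rw [iteratedDeriv_eq_iterate, Nat.succ_eq_add_one, hic2, zero_mul]
end

section
/- Let T > 0 and z ∈ C^∞([0,T]) satisfy |z^{(j)}(t)| ≤ M (3j)! / R^{3j} for all j ≥ 0 and t ∈ [0,T], where R > 1. Then the series y(x,t) = Σ_{i≥0} g_i(x) z^{(i)}(t) converges together with all its derivatives uniformly on [-1,0]×[0,T]; y is Gevrey of order 1 in x and 3 in t, and solves ∂ₜy + ∂ₓ³y + a∂ₓy = 0 with y(0,t) = ∂ₓy(0,t) = 0, ∂ₓ²y(0,t) = z(t). -/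
open Set Filter Topology

/-- Finitely-supported-smooth bump monomials used in the Borel construction. -/
theorem aux_borel_s10 {E : Type*} [NormedAddCommGroup E] [NormedSpace ℝ E] [CompleteSpace E]
    (e : ℕ → E) (c : ℝ) :
    ∃ f : ℝ → E, ContDiff ℝ (⊤ : ℕ∞) f ∧ ∀ n, iteratedDeriv n f c = e n := by
  suffices H : ∃ f : ℝ → E, ContDiff ℝ (⊤ : ℕ∞) f ∧ ∀ n, iteratedDeriv n f 0 = e n by
    obtain ⟨f, hf, h⟩ := H
    refine ⟨fun t => f (t - c), hf.comp (contDiff_id.sub contDiff_const), fun n => ?_⟩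
    rw [iteratedDeriv_comp_sub_const]
    simpa using h n
  let χ : ContDiffBump (0 : ℝ) := ⟨1, 2, by norm_num, by norm_num⟩
  have hχ : ContDiff ℝ (⊤ : ℕ∞) (χ : ℝ → ℝ) := χ.contDiff
  let θ : ℕ → ℝ → ℝ := fun k s => s ^ k * χ s
  have hθ : ∀ k, ContDiff ℝ (⊤ : ℕ∞) (θ k) := fun k => (contDiff_id.pow k).mul hχ
  have hθc : ∀ k, HasCompactSupport (θ k) := fun k => χ.hasCompactSupport.mul_left
  have hbd : ∀ n k, ∃ C : ℝ, 0 ≤ C ∧ ∀ s, ‖iteratedDeriv n (θ k) s‖ ≤ C := by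
    intro n k
    have hc : Continuous (fun s => iteratedFDeriv ℝ n (θ k) s) :=
      (hθ k).continuous_iteratedFDeriv (by exact_mod_cast le_top)
    obtain ⟨C, hC⟩ := ((hθc k).iteratedFDeriv (𝕜 := ℝ) n).exists_bound_of_continuous hc
    refine ⟨C, (norm_nonneg _).trans (hC 0), fun s => ?_⟩
    rw [← norm_iteratedFDeriv_eq_norm_iteratedDeriv]
    exact hC s
  choose C hC0 hC using hbd
  let lam : ℕ → ℝ := fun k => 1 + 2 ^ k * (‖e k‖ * ∑ n ∈ Finset.range (k + 1), C n k)
  have hlam : ∀ k, 1 ≤ lam k := fun k => by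
    have : 0 ≤ 2 ^ k * (‖e k‖ * ∑ n ∈ Finset.range (k + 1), C n k) := by
      have := Finset.sum_nonneg (fun n (_ : n ∈ Finset.range (k+1)) => hC0 n k)
      positivity
    simpa [lam] using this
  let F : ℕ → ℝ → E := fun k t => θ k (lam k * t) • (((lam k) ^ k)⁻¹ • ((k.factorial : ℝ)⁻¹ • e k))
  have hsm : ∀ k, ContDiff ℝ (⊤ : ℕ∞) (fun t => θ k (lam k * t)) := fun k =>
    (hθ k).comp (contDiff_const.mul contDiff_id)
  have hF : ∀ k, ContDiff ℝ (⊤ : ℕ∞) (F k) := fun k => (hsm k).smul contDiff_const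
  have hFd : ∀ n k t, iteratedDeriv n (F k) t
      = ((lam k) ^ n * iteratedDeriv n (θ k) (lam k * t)) •
        (((lam k) ^ k)⁻¹ • ((k.factorial : ℝ)⁻¹ • e k)) := by
    intro n k t
    have h1 : iteratedDeriv n (fun t => θ k (lam k * t)) t
        = (lam k) ^ n * iteratedDeriv n (θ k) (lam k * t) := by
      rw [iteratedDeriv_comp_const_mul ((hθ k).of_le (by exact_mod_cast le_top))]
    rw [← h1]
    exact iteratedDeriv_smul_const (((hsm k).of_le (by exact_mod_cast le_top)).contDiffAt) _
  let v : ℕ → ℕ → ℝ := fun n k => (lam k) ^ n * C n k * (((lam k) ^ k)⁻¹ * ‖e k‖)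
  have hv : ∀ n, Summable (v n) := by
    intro n
    refine Summable.of_norm_bounded_eventually_nat (g := fun k => (1/2 : ℝ) ^ k)
      (summable_geometric_of_lt_one (by norm_num) (by norm_num)) ?_
    filter_upwards [eventually_gt_atTop n] with k hk
    have hl := hlam k
    have hl0 : 0 < lam k := by linarith
    have hpos : 0 ≤ v n k := by
      have := hC0 n k
      positivity
    rw [Real.norm_of_nonneg hpos]
    have h2 : 2 ^ k * (‖e k‖ * C n k) ≤ lam k := by
      have : C n k ≤ ∑ n ∈ Finset.range (k + 1), C n k :=
        Finset.single_le_sum (f := fun n => C n k) (fun i _ => hC0 i k) (by simp; omega)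
      have h3 : 2 ^ k * (‖e k‖ * C n k) ≤ 2 ^ k * (‖e k‖ * ∑ n ∈ Finset.range (k + 1), C n k) := by
        gcongr
      simp only [lam]; linarith
    have h3 : lam k ^ n * lam k ≤ lam k ^ k := by
      rw [← pow_succ]; exact pow_le_pow_right₀ hl hk
    have h4 : v n k = (lam k ^ n * (‖e k‖ * C n k)) / lam k ^ k := by
      simp only [v]; field_simp
    rw [h4, div_le_iff₀ (by positivity)]
    have h5 : ‖e k‖ * C n k ≤ (1/2)^k * lam k := by
      rw [one_div, inv_pow, inv_mul_eq_div, le_div_iff₀ (by positivity)]; linarith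
    calc lam k ^ n * (‖e k‖ * C n k) ≤ lam k ^ n * ((1/2)^k * lam k) := by gcongr
      _ = (1/2)^k * (lam k ^ n * lam k) := by ring
      _ ≤ _ := by gcongr
  have hb : ∀ (n k : ℕ) (t : ℝ), (n : ℕ∞) ≤ (⊤ : ℕ∞) → ‖iteratedFDeriv ℝ n (F k) t‖ ≤ v n k := by
    intro n k t _
    have hl := hlam k
    have hl0 : 0 < lam k := by linarith
    rw [norm_iteratedFDeriv_eq_norm_iteratedDeriv, hFd, norm_smul, norm_smul, norm_smul, norm_mul]
    simp only [norm_inv, norm_pow, Real.norm_of_nonneg hl0.le, v, RCLike.norm_natCast]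
    have hf : ((k.factorial : ℝ)⁻¹) ≤ 1 := inv_le_one_of_one_le₀ (by exact_mod_cast k.factorial_pos)
    gcongr
    · exact mul_nonneg (by positivity) (hC0 n k)
    · exact hC n k _
    · exact mul_le_of_le_one_left (norm_nonneg _) hf
  refine ⟨fun t => ∑' k, F k t, contDiff_tsum hF (fun n _ => hv n) hb, fun n => ?_⟩
  have h0 : ∀ k, iteratedDeriv n (F k) 0 = if k = n then e n else 0 := by
    intro k
    have hl0 : 0 < lam k := by linarith [hlam k]
    rw [hFd]
    have : iteratedDeriv n (θ k) (lam k * 0) = if n = k then (k.factorial : ℝ) else 0 := by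
      have h9 := iteratedDeriv_fun_pow_zero (𝕜 := ℝ) (n := n) (m := k)
      push_cast at h9
      rw [mul_zero, ← h9]
      apply Filter.EventuallyEq.iteratedDeriv_eq
      filter_upwards [χ.eventuallyEq_one] with s hs
      simp [θ, hs]
    rw [this]
    by_cases h : k = n
    · subst h
      have : (k.factorial : ℝ) ≠ 0 := by positivity
      simp only [if_true, smul_smul]
      rw [show lam k ^ k * (k.factorial : ℝ) * ((lam k ^ k)⁻¹ * (k.factorial : ℝ)⁻¹) = 1 by
        field_simp]
      simp
    · simp [h, Ne.symm h]
  have key := iteratedFDeriv_tsum_apply (N := ⊤) hF (fun n _ => hv n) hb (k := n) le_top 0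
  rw [iteratedDeriv_eq_iteratedFDeriv, key, ContinuousMultilinearMap.tsum_eval]
  · simp_rw [← iteratedDeriv_eq_iteratedFDeriv, h0]
    exact tsum_ite_eq n _
  · exact Summable.of_norm_bounded (hv n) (fun k => hb n k 0 le_top)

theorem aux_contDiff {E : Type*} [NormedAddCommGroup E] [NormedSpace ℝ E]
    (F : ℕ → ℝ → E) (h : ∀ n t, HasDerivAt (F n) (F (n + 1) t) t) :
    ContDiff ℝ (⊤ : ℕ∞) (F 0) ∧ ∀ n, iteratedDeriv n (F 0) = F n := by
  have h1 : ∀ n, iteratedDeriv n (F 0) = F n := by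
    intro n
    induction n with
    | zero => simp
    | succ n ih =>
      rw [iteratedDeriv_succ, ih]
      ext t
      exact (h n t).deriv
  refine ⟨contDiff_of_differentiable_iteratedDeriv fun m _ => ?_, h1⟩
  rw [h1]
  exact fun t => (h m t).differentiableAt

theorem aux_within {E : Type*} [NormedAddCommGroup E] [NormedSpace ℝ E]
    {f : ℝ → E} {f' : E} {s : Set ℝ} {t : ℝ} (hs : IsClosed s)
    (h : t ∈ s → HasDerivWithinAt f f' s t) : HasDerivWithinAt f f' s t := by
  by_cases ht : t ∈ s
  · exact h ht
  · rw [hasDerivWithinAt_iff_hasFDerivWithinAt]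
    exact HasFDerivWithinAt.of_notMem_closure (by rwa [hs.closure_eq])

/-- Extension of smooth vector-valued functions from a compact interval to the line. -/
theorem aux_extend {E : Type*} [NormedAddCommGroup E] [NormedSpace ℝ E] [CompleteSpace E]
    {α β : ℝ} (hαβ : α < β) (V : ℕ → ℝ → E)
    (hV : ∀ n, ∀ t ∈ Icc α β, HasDerivWithinAt (V n) (V (n + 1) t) (Icc α β) t) :
    ∃ F : ℝ → E, ContDiff ℝ (⊤ : ℕ∞) F ∧ ∀ n, ∀ t ∈ Icc α β, iteratedDeriv n F t = V n t := by
  obtain ⟨f, hf, hf'⟩ := aux_borel_s10 (fun n => V n α) α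
  obtain ⟨k, hk, hk'⟩ := aux_borel_s10 (fun n => V n β) β
  have hD : ∀ (f : ℝ → E), ContDiff ℝ (⊤ : ℕ∞) f → ∀ n t,
      HasDerivAt (iteratedDeriv n f) (iteratedDeriv (n + 1) f t) t := by
    intro f hf n t
    rw [iteratedDeriv_succ]
    exact ((hf.differentiable_iteratedDeriv n (by exact_mod_cast ENat.natCast_lt_top n)) t).hasDerivAt
  let F : ℕ → ℝ → E := fun n t =>
    if t ≤ α then iteratedDeriv n f t else if t ≤ β then V n t else iteratedDeriv n k t
  have e1 : ∀ n, EqOn (F n) (iteratedDeriv n f) (Iic α) := fun n t ht => by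
    simp only [F]; rw [if_pos (mem_Iic.1 ht)]
  have e2 : ∀ n, EqOn (F n) (V n) (Icc α β) := fun n t ht => by
    rcases eq_or_lt_of_le ht.1 with h | h
    · subst h; rw [e1 n (mem_Iic.2 le_rfl), hf']
    · simp only [F]; rw [if_neg (not_le.2 h), if_pos ht.2]
  have e3 : ∀ n, EqOn (F n) (iteratedDeriv n k) (Ici β) := fun n t ht => by
    rcases eq_or_lt_of_le (mem_Ici.1 ht) with h | h
    · subst h; rw [e2 n (right_mem_Icc.2 hαβ.le), hk']
    · simp only [F]; rw [if_neg (not_le.2 (hαβ.trans h)), if_neg (not_le.2 h)]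
  have hF : ∀ n t, HasDerivAt (F n) (F (n + 1) t) t := by
    intro n t
    have h1 : HasDerivWithinAt (F n) (F (n + 1) t) (Iic α) t := aux_within isClosed_Iic fun ht => by
      rw [e1 (n + 1) ht]
      exact (hD f hf n t).hasDerivWithinAt.congr (e1 n) (e1 n ht)
    have h2 : HasDerivWithinAt (F n) (F (n + 1) t) (Icc α β) t := aux_within isClosed_Icc fun ht => by
      rw [e2 (n + 1) ht]
      exact (hV n t ht).congr (e2 n) (e2 n ht)
    have h3 : HasDerivWithinAt (F n) (F (n + 1) t) (Ici β) t := aux_within isClosed_Ici fun ht => by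
      rw [e3 (n + 1) ht]
      exact (hD k hk n t).hasDerivWithinAt.congr (e3 n) (e3 n ht)
    have h4 := (h1.union h2).union h3
    rw [Iic_union_Icc_eq_Iic hαβ.le, Iic_union_Ici] at h4
    exact h4.hasDerivAt univ_mem
  obtain ⟨c1, c2⟩ := aux_contDiff F hF
  exact ⟨F 0, c1, fun n t ht => by rw [c2, e2 n ht]⟩
theorem aux_hasDeriv {E : Type*} [NormedAddCommGroup E] [NormedSpace ℝ E]
    {f : ℝ → E} (hf : ContDiff ℝ (⊤ : ℕ∞) f) (n : ℕ) (t : ℝ) :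
    HasDerivAt (iteratedDeriv n f) (iteratedDeriv (n + 1) f t) t := by
  rw [iteratedDeriv_succ]
  exact ((hf.differentiable_iteratedDeriv n (by exact_mod_cast ENat.natCast_lt_top n)) t).hasDerivAt

theorem aux_clm {E : Type*} [NormedAddCommGroup E] [NormedSpace ℝ E] (L : E →L[ℝ] ℝ)
    {f : ℝ → E} (hf : ContDiff ℝ (⊤ : ℕ∞) f) (n : ℕ) :
    iteratedDeriv n (fun t => L (f t)) = fun t => L (iteratedDeriv n f t) := by
  have := (aux_contDiff (fun n t => L (iteratedDeriv n f t))
    (fun n t => L.hasFDerivAt.comp_hasDerivAt t (aux_hasDeriv hf n t))).2 n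
  simpa using this

theorem aux_mem {p c : ℝ} (hp0 : 0 ≤ p) (hp1 : p < 1) {a : ℕ → ℝ}
    (h : ∀ i, |a i| ≤ c * p ^ i) : Memℓp (E := fun _ : ℕ => ℝ) a 2 := by
  apply memℓp_gen
  refine Summable.of_nonneg_of_le (fun i => by positivity) (fun i => ?_)
    ((summable_geometric_of_lt_one hp0 hp1).mul_left (c ^ 2))
  have h1 : p ^ i ≤ 1 := pow_le_one₀ hp0 hp1.le
  have h2 : 0 ≤ p ^ i := by positivity
  simp only [ENNReal.toReal_ofNat, Real.rpow_ofNat, Real.norm_eq_abs]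
  calc |a i| ^ 2 ≤ (c * p ^ i) ^ 2 := pow_le_pow_left₀ (abs_nonneg _) (h i) 2
    _ = c ^ 2 * (p ^ i * p ^ i) := by ring
    _ ≤ c ^ 2 * (p ^ i * 1) := by gcongr
    _ = _ := by ring

theorem aux_norm {p c : ℝ} (hp0 : 0 ≤ p) (hp1 : p < 1) {a : lp (fun _ : ℕ => ℝ) 2}
    (h : ∀ i, |a i| ≤ c * p ^ i) : ‖a‖ ≤ c / (1 - p) := by
  have hc : 0 ≤ c := by simpa using (abs_nonneg _).trans (h 0)
  have hp : 0 < 1 - p := by linarith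
  refine lp.norm_le_of_forall_sum_le (by simp) (by positivity) fun s => ?_
  simp only [ENNReal.toReal_ofNat, Real.rpow_ofNat, Real.norm_eq_abs]
  have h3 : ∑ i ∈ s, c * p ^ i ≤ c / (1 - p) := by
    rw [← Finset.mul_sum, div_eq_mul_inv, ← tsum_geometric_of_lt_one hp0 hp1]
    gcongr
    exact (summable_geometric_of_lt_one hp0 hp1).sum_le_tsum s (fun i _ => by positivity)
  calc ∑ i ∈ s, |a i| ^ 2 ≤ ∑ i ∈ s, (c * p ^ i) ^ 2 :=
        Finset.sum_le_sum fun i _ => pow_le_pow_left₀ (abs_nonneg _) (h i) 2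
    _ ≤ (∑ i ∈ s, c * p ^ i) ^ 2 := Finset.sum_sq_le_sq_sum_of_nonneg (fun i _ => by positivity)
    _ ≤ _ := pow_le_pow_left₀ (Finset.sum_nonneg fun i _ => by positivity) h3 2

theorem aux_taylor {α β C : ℝ} {f f' f'' : ℝ → ℝ} (h1 : ∀ t, HasDerivAt f (f' t) t)
    (h2 : ∀ t, HasDerivAt f' (f'' t) t) (hb : ∀ t ∈ Icc α β, |f'' t| ≤ C)
    {s t : ℝ} (hs : s ∈ Icc α β) (ht : t ∈ Icc α β) :
    |f s - f t - (s - t) * f' t| ≤ C * |s - t| ^ 2 := by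
  have hC : 0 ≤ C := (abs_nonneg _).trans (hb t ht)
  have hsub : uIcc t s ⊆ Icc α β := uIcc_subset_Icc ht hs
  have hf' : ∀ r ∈ uIcc t s, |f' r - f' t| ≤ C * |s - t| := by
    intro r hr
    have := (convex_Icc α β).norm_image_sub_le_of_norm_hasDerivWithin_le (f := f') (f' := f'')
      (C := C) (fun x hx => (h2 x).hasDerivWithinAt) (fun x hx => hb x hx) ht (hsub hr)
    refine this.trans ?_
    gcongr
    exact abs_sub_left_of_mem_uIcc hr
  have := (convex_uIcc t s).norm_image_sub_le_of_norm_hasDerivWithin_le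
    (f := fun r => f r - r * f' t) (f' := fun r => f' r - 1 * f' t) (C := C * |s - t|)
    (fun x hx => ((h1 x).sub ((hasDerivAt_id x).mul_const (f' t))).hasDerivWithinAt)
    (fun x hx => by simpa using hf' x hx) left_mem_uIcc right_mem_uIcc
  rw [Real.norm_eq_abs, Real.norm_eq_abs] at this
  calc _ = |f s - s * f' t - (f t - t * f' t)| := by congr 1; ring
    _ ≤ _ := this
    _ = _ := by ring

theorem aux_lift {α β p : ℝ} (hαβ : α < β) (hp0 : 0 ≤ p) (hp1 : p < 1) (A : ℕ → ℝ)
    (u : ℕ → ℕ → ℝ → ℝ) (hd : ∀ n i t, HasDerivAt (u n i) (u (n + 1) i t) t)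
    (hb : ∀ n i, ∀ t ∈ Icc α β, |u n i t| ≤ A n * p ^ i) :
    ∃ F : ℝ → lp (fun _ : ℕ => ℝ) 2, ContDiff ℝ (⊤ : ℕ∞) F ∧ ∀ n, ∀ t ∈ Icc α β,
      (∀ i, iteratedDeriv n F t i = u n i t) ∧ ‖iteratedDeriv n F t‖ ≤ A n / (1 - p) := by
  classical
  let V : ℕ → ℝ → lp (fun _ : ℕ => ℝ) 2 := fun n t =>
    if h : t ∈ Icc α β then ⟨fun i => u n i t, aux_mem hp0 hp1 (fun i => hb n i t h)⟩ else 0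
  have hVi : ∀ n, ∀ t ∈ Icc α β, ∀ i, V n t i = u n i t := fun n t ht i => by
    simp only [V]; rw [dif_pos ht]
  have hV : ∀ n, ∀ t ∈ Icc α β, HasDerivWithinAt (V n) (V (n + 1) t) (Icc α β) t := by
    intro n t ht
    rw [hasDerivWithinAt_iff_isLittleO]
    have hO : (fun s => V n s - V n t - (s - t) • V (n + 1) t) =O[𝓝[Icc α β] t]
        (fun s => (s - t) ^ 2) := by
      refine Asymptotics.IsBigO.of_bound (A (n + 2) / (1 - p)) ?_
      filter_upwards [self_mem_nhdsWithin] with s hs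
      have := aux_norm hp0 hp1 (a := V n s - V n t - (s - t) • V (n + 1) t)
        (c := A (n + 2) * |s - t| ^ 2) (fun i => by
          have := aux_taylor (hd n i) (hd (n + 1) i) (hb (n + 2) i) hs ht
          simp only [lp.coeFn_sub, lp.coeFn_smul, Pi.sub_apply, Pi.smul_apply, smul_eq_mul,
            hVi _ _ hs, hVi _ _ ht]
          linarith)
      rw [norm_pow, Real.norm_eq_abs]
      exact this.trans_eq (by ring)
    refine hO.trans_isLittleO ?_
    have : (fun s : ℝ => (s - t) ^ 2) =o[𝓝 t] (fun s => s - t) := by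
      have := Asymptotics.isLittleO_pow_sub_sub t (m := 2) (by norm_num)
      simpa using this
    exact this.mono nhdsWithin_le_nhds
  obtain ⟨F, hF, hF'⟩ := aux_extend hαβ V hV
  refine ⟨F, hF, fun n t ht => ⟨fun i => by rw [hF' n t ht, hVi n t ht], ?_⟩⟩
  rw [hF' n t ht]
  exact aux_norm hp0 hp1 fun i => by rw [hVi n t ht]; exact hb n i t ht

theorem aux_pow (k : ℕ) (s : ℝ) :
    HasDerivAt (fun s : ℝ => s ^ (k + 1) / ((k + 1).factorial : ℝ)) (s ^ k / (k.factorial : ℝ)) s := by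
  have := (hasDerivAt_pow (k + 1) s).div_const ((k + 1).factorial : ℝ)
  refine this.congr_deriv ?_
  rw [Nat.factorial_succ]
  push_cast
  have : (k.factorial : ℝ) ≠ 0 := by positivity
  field_simp

theorem aux_int_s10 {h h1 B B' : ℝ → ℝ} (hd : ∀ x, HasDerivAt h (h1 x) x)
    (h0 : |h 0| ≤ B 0) (hB : ∀ s, HasDerivAt B (B' s) s)
    (hb : ∀ s ∈ Icc (0 : ℝ) 1, |h1 (-s)| ≤ B' s) :
    ∀ s ∈ Icc (0 : ℝ) 1, |h (-s)| ≤ B s := by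
  have hW : ∀ s, HasDerivAt (fun s => h (-s)) (-h1 (-s)) s := fun s => by
    exact ((hd (-s)).comp s (hasDerivAt_neg s)).congr_deriv (by ring)
  intro s hs
  exact image_norm_le_of_norm_deriv_right_le_deriv_boundary
    (f := fun s => h (-s)) (f' := fun s => -h1 (-s)) (B := B) (B' := B')
    (fun s _ => (hW s).continuousAt.continuousWithinAt) (fun s _ => (hW s).hasDerivWithinAt)
    (by simpa using h0) hB
    (fun s hs => by simpa using hb s (Ico_subset_Icc_self hs)) hs

theorem aux_ode {a : ℝ} (ha : 0 ≤ a) {h1 h2 h3 f B B' : ℝ → ℝ}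
    (hd1 : ∀ x, HasDerivAt h1 (h2 x) x) (hd2 : ∀ x, HasDerivAt h2 (h3 x) x)
    (he : ∀ x ∈ Icc (-1 : ℝ) 0, h3 x + a * h1 x = f x)
    (h10 : h1 0 = 0) (h20 : |h2 0| ≤ B 0) (hB : ∀ s, HasDerivAt B (B' s) s)
    (hb : ∀ s ∈ Icc (0 : ℝ) 1, |f (-s)| ≤ B' s) :
    ∀ s ∈ Icc (0 : ℝ) 1, |h2 (-s)| ≤ B s := by
  let ω : ℝ := Real.sqrt a
  have hω : (ω : ℂ) * ω = a := by
    rw [← Complex.ofReal_mul, Real.mul_self_sqrt ha]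
  let W : ℝ → ℂ := fun s =>
    Complex.exp ((ω * s : ℝ) * Complex.I) * ((h2 (-s) : ℂ) + Complex.I * ω * (h1 (-s) : ℂ))
  let W' : ℝ → ℂ := fun s =>
    -(Complex.exp ((ω * s : ℝ) * Complex.I) * ((h3 (-s) + a * h1 (-s) : ℝ) : ℂ))
  have hW : ∀ s, HasDerivAt W (W' s) s := by
    intro s
    have e1 : HasDerivAt (fun s : ℝ => ((h2 (-s) : ℝ) : ℂ)) ((-h3 (-s) : ℝ) : ℂ) s := by
      have : HasDerivAt (fun s : ℝ => h2 (-s)) (-h3 (-s)) s := by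
        exact ((hd2 (-s)).comp s (hasDerivAt_neg s)).congr_deriv (by ring)
      exact this.ofReal_comp
    have e2 : HasDerivAt (fun s : ℝ => ((h1 (-s) : ℝ) : ℂ)) ((-h2 (-s) : ℝ) : ℂ) s := by
      have : HasDerivAt (fun s : ℝ => h1 (-s)) (-h2 (-s)) s := by
        exact ((hd1 (-s)).comp s (hasDerivAt_neg s)).congr_deriv (by ring)
      exact this.ofReal_comp
    have e3 : HasDerivAt (fun s : ℝ => ((ω * s : ℝ) : ℂ) * Complex.I) (((ω * 1 : ℝ) : ℂ) * Complex.I) s :=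
      (((hasDerivAt_id s).const_mul ω).ofReal_comp).mul_const _
    refine (e3.cexp.mul (e1.add (e2.const_mul (Complex.I * ω)))).congr_deriv ?_
    simp only [W', Pi.add_apply]
    push_cast
    rw [← hω]
    linear_combination (Complex.exp (↑ω * ↑s * Complex.I) * ω * ω * h1 (-s)) * Complex.I_mul_I
  have hn : ∀ s : ℝ, ‖Complex.exp ((ω * s : ℝ) * Complex.I)‖ = 1 := fun s =>
    Complex.norm_exp_ofReal_mul_I _
  intro s hs
  have key : ‖W s‖ ≤ B s := image_norm_le_of_norm_deriv_right_le_deriv_boundary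
    (f := W) (f' := W') (B := B) (B' := B')
    (fun s _ => (hW s).continuousAt.continuousWithinAt) (fun s _ => (hW s).hasDerivWithinAt)
    (by simpa [W, h10] using h20) hB
    (fun s hs => by
      have hs' := Ico_subset_Icc_self hs
      simp only [W', norm_neg, norm_mul, hn, one_mul, Complex.norm_real]
      rw [he (-s) ⟨by linarith [hs'.2], by linarith [hs'.1]⟩]
      exact hb s hs') hs
  refine le_trans ?_ key
  have : h2 (-s) = ((h2 (-s) : ℂ) + Complex.I * ω * (h1 (-s) : ℂ)).re := by simp
  simp only [W, norm_mul, hn, one_mul]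
  conv_lhs => rw [this]
  exact Complex.abs_re_le_norm _

theorem aux_zero_s10 {Φ : ℝ → ℝ} {d x : ℝ} (hd : HasDerivAt Φ d x) (hx : x ∈ Icc (-1 : ℝ) 0)
    (h0 : ∀ x ∈ Icc (-1 : ℝ) 0, Φ x = 0) : d = 0 := by
  have h1 : HasDerivWithinAt (fun _ : ℝ => (0 : ℝ)) d (Icc (-1) 0) x :=
    hd.hasDerivWithinAt.congr (fun y hy => (h0 y hy).symm) (h0 x hx).symm
  exact (uniqueDiffOn_Icc (by norm_num) x hx).eq_deriv _ h1 (hasDerivWithinAt_const x _ 0)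

theorem aux_diffode_s10 {a : ℝ} {h k : ℝ → ℝ} (hh : ContDiff ℝ (⊤ : ℕ∞) h)
    (hk : ContDiff ℝ (⊤ : ℕ∞) k)
    (he : ∀ x ∈ Icc (-1 : ℝ) 0, iteratedDeriv 3 h x + a * iteratedDeriv 1 h x = - k x) (l : ℕ) :
    ∀ x ∈ Icc (-1 : ℝ) 0, iteratedDeriv (l + 3) h x + a * iteratedDeriv (l + 1) h x
      + iteratedDeriv l k x = 0 := by
  induction l with
  | zero => intro x hx; simp only [iteratedDeriv_zero, Nat.zero_add]; linarith [he x hx]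
  | succ l ih =>
    intro x hx
    exact aux_zero_s10 (((aux_hasDeriv hh (l + 3) x).add ((aux_hasDeriv hh (l + 1) x).const_mul a)).add
      (aux_hasDeriv hk l x)) hx ih

theorem aux_g3 {a : ℝ} (ha : 0 ≤ a) (g : ℕ → ℝ → ℝ)
    (hsmooth : ∀ i, ContDiff ℝ (⊤ : ℕ∞) (g i))
    (hode0 : ∀ x ∈ Icc (-1 : ℝ) 0, iteratedDeriv 3 (g 0) x + a * iteratedDeriv 1 (g 0) x = 0)
    (hic00 : g 0 0 = 0) (hic01 : iteratedDeriv 1 (g 0) 0 = 0) (hic02 : iteratedDeriv 2 (g 0) 0 = 1)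
    (hode : ∀ i : ℕ, ∀ x ∈ Icc (-1 : ℝ) 0,
      iteratedDeriv 3 (g (i + 1)) x + a * iteratedDeriv 1 (g (i + 1)) x = - g i x)
    (hic0 : ∀ i : ℕ, g (i + 1) 0 = 0) (hic1 : ∀ i : ℕ, iteratedDeriv 1 (g (i + 1)) 0 = 0)
    (hic2 : ∀ i : ℕ, iteratedDeriv 2 (g (i + 1)) 0 = 0) (i : ℕ) :
    (∀ s ∈ Icc (0 : ℝ) 1, |iteratedDeriv 2 (g i) (-s)| ≤ s ^ (3 * i) / ((3 * i).factorial : ℝ)) ∧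
    (∀ s ∈ Icc (0 : ℝ) 1, |iteratedDeriv 1 (g i) (-s)| ≤ s ^ (3 * i + 1) / ((3 * i + 1).factorial : ℝ)) ∧
    (∀ s ∈ Icc (0 : ℝ) 1, |g i (-s)| ≤ s ^ (3 * i + 2) / ((3 * i + 2).factorial : ℝ)) := by
  have step : ∀ i, g i 0 = 0 → iteratedDeriv 1 (g i) 0 = 0 →
      (∀ s ∈ Icc (0 : ℝ) 1, |iteratedDeriv 2 (g i) (-s)| ≤ s ^ (3 * i) / ((3 * i).factorial : ℝ)) →
      (∀ s ∈ Icc (0 : ℝ) 1, |iteratedDeriv 2 (g i) (-s)| ≤ s ^ (3 * i) / ((3 * i).factorial : ℝ)) ∧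
      (∀ s ∈ Icc (0 : ℝ) 1, |iteratedDeriv 1 (g i) (-s)| ≤ s ^ (3 * i + 1) / ((3 * i + 1).factorial : ℝ)) ∧
      (∀ s ∈ Icc (0 : ℝ) 1, |g i (-s)| ≤ s ^ (3 * i + 2) / ((3 * i + 2).factorial : ℝ)) := by
    intro i h0 h1 h2
    have h3 := aux_int_s10 (aux_hasDeriv (hsmooth i) 1) (B := fun s => s ^ (3 * i + 1) / ((3 * i + 1).factorial : ℝ))
      (by simp [h1]) (aux_pow (3 * i)) h2
    have h4 : ∀ x, HasDerivAt (g i) (iteratedDeriv 1 (g i) x) x := fun x => by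
      have := aux_hasDeriv (hsmooth i) 0 x
      rwa [iteratedDeriv_zero] at this
    refine ⟨h2, h3, aux_int_s10 (B := fun s => s ^ (3 * i + 2) / ((3 * i + 2).factorial : ℝ))
      h4 (by simp [h0]) (aux_pow (3 * i + 1)) (by simpa using h3)⟩
  induction i with
  | zero =>
    refine step 0 hic00 hic01 ?_
    simpa using aux_ode ha (aux_hasDeriv (hsmooth 0) 1) (aux_hasDeriv (hsmooth 0) 2)
      (f := fun _ => 0) (B := fun _ => 1) (B' := fun _ => 0) hode0 hic01 (by simp [hic02])
      (fun s => hasDerivAt_const s _) (by simp)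
  | succ i ih =>
    refine step (i + 1) (hic0 i) (hic1 i) ?_
    exact aux_ode ha (aux_hasDeriv (hsmooth (i+1)) 1) (aux_hasDeriv (hsmooth (i+1)) 2)
      (f := fun x => - g i x) (B := fun s => s ^ (3 * (i + 1)) / ((3 * (i + 1)).factorial : ℝ))
      (B' := fun s => s ^ (3 * i + 2) / ((3 * i + 2).factorial : ℝ)) (hode i) (hic1 i)
      (by simp [hic2 i]) (aux_pow (3 * i + 2)) (by simpa using ih.2.2)

theorem aux_gl {a : ℝ} (ha : 0 ≤ a) (g : ℕ → ℝ → ℝ)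
    (hsmooth : ∀ i, ContDiff ℝ (⊤ : ℕ∞) (g i))
    (hode0 : ∀ x ∈ Icc (-1 : ℝ) 0, iteratedDeriv 3 (g 0) x + a * iteratedDeriv 1 (g 0) x = 0)
    (hic00 : g 0 0 = 0) (hic01 : iteratedDeriv 1 (g 0) 0 = 0) (hic02 : iteratedDeriv 2 (g 0) 0 = 1)
    (hode : ∀ i : ℕ, ∀ x ∈ Icc (-1 : ℝ) 0,
      iteratedDeriv 3 (g (i + 1)) x + a * iteratedDeriv 1 (g (i + 1)) x = - g i x)
    (hic0 : ∀ i : ℕ, g (i + 1) 0 = 0) (hic1 : ∀ i : ℕ, iteratedDeriv 1 (g (i + 1)) 0 = 0)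
    (hic2 : ∀ i : ℕ, iteratedDeriv 2 (g (i + 1)) 0 = 0) (l : ℕ) :
    ∀ i, ∀ x ∈ Icc (-1 : ℝ) 0,
      |iteratedDeriv l (g i) x| ≤ (1 + a) ^ l / ((3 * i + 2 - l).factorial : ℝ) := by
  have hK : 1 ≤ 1 + a := by linarith
  have H := aux_g3 ha g hsmooth hode0 hic00 hic01 hic02 hode hic0 hic1 hic2
  have low : ∀ (l n : ℕ) (s c : ℝ), s ∈ Icc (0 : ℝ) 1 → c ≤ s ^ n / (n.factorial : ℝ) →
      c ≤ (1 + a) ^ l / (n.factorial : ℝ) := by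
    intro l n s c hs hc
    refine hc.trans ?_
    gcongr
    exact (pow_le_one₀ hs.1 hs.2).trans (one_le_pow₀ hK)
  have neg : ∀ x ∈ Icc (-1 : ℝ) 0, -x ∈ Icc (0 : ℝ) 1 := fun x hx =>
    ⟨by linarith [hx.2], by linarith [hx.1]⟩
  induction l using Nat.strong_induction_on with
  | _ l ih =>
    intro i x hx
    match l, ih with
    | 0, _ => exact low 0 (3 * i + 2) (-x) _ (neg x hx) (by simpa using (H i).2.2 (-x) (neg x hx))
    | 1, _ => exact low 1 (3 * i + 1) (-x) _ (neg x hx) (by simpa using (H i).2.1 (-x) (neg x hx))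
    | 2, _ => exact low 2 (3 * i) (-x) _ (neg x hx) (by simpa using (H i).1 (-x) (neg x hx))
    | l + 3, ih =>
      have h1 := ih (l + 1) (by omega) i x hx
      have hf : ∀ m n : ℕ, m ≤ n → ∀ c : ℝ, 0 ≤ c → c / (n.factorial : ℝ) ≤ c / (m.factorial : ℝ) := by
        intro m n hmn c hc
        have := Nat.factorial_le hmn
        gcongr
      have h2 := h1.trans (hf (3 * i + 2 - (l + 3)) _ (by omega) _ (by positivity))
      have hKl : 0 ≤ (1 + a) ^ l := by positivity
      have hF : (0 : ℝ) < ((3 * i + 2 - (l + 3)).factorial : ℝ) := by positivity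
      have hfin : a * ((1 + a) ^ (l + 1) / ((3 * i + 2 - (l + 3)).factorial : ℝ))
          + (1 + a) ^ l / ((3 * i + 2 - (l + 3)).factorial : ℝ)
          ≤ (1 + a) ^ (l + 3) / ((3 * i + 2 - (l + 3)).factorial : ℝ) := by
        rw [← mul_div_assoc, ← add_div]
        gcongr
        have : a * (1 + a) + 1 ≤ (1 + a) ^ 3 := by nlinarith [mul_nonneg ha ha, mul_nonneg ha (mul_nonneg ha ha)]
        calc a * (1 + a) ^ (l + 1) + (1 + a) ^ l = (1 + a) ^ l * (a * (1 + a) + 1) := by ring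
          _ ≤ (1 + a) ^ l * (1 + a) ^ 3 := by gcongr
          _ = _ := by ring
      refine le_trans ?_ hfin
      have hm : |a * iteratedDeriv (l + 1) (g i) x| ≤
          a * ((1 + a) ^ (l + 1) / ((3 * i + 2 - (l + 3)).factorial : ℝ)) := by
        rw [abs_mul, abs_of_nonneg ha]; gcongr
      cases i with
      | zero =>
        have e := aux_diffode_s10 (hsmooth 0) (k := fun _ => 0) contDiff_const (by simpa using hode0) l x hx
        have e' : iteratedDeriv (l + 3) (g 0) x = - (a * iteratedDeriv (l + 1) (g 0) x) := by
          have : iteratedDeriv l (fun _ : ℝ => (0 : ℝ)) x = 0 := by simp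
          linarith
        rw [e', abs_neg]
        have : 0 ≤ (1 + a) ^ l / ((3 * 0 + 2 - (l + 3)).factorial : ℝ) := by positivity
        linarith
      | succ i =>
        have e := aux_diffode_s10 (hsmooth (i + 1)) (hsmooth i) (hode i) l x hx
        have e' : iteratedDeriv (l + 3) (g (i + 1)) x =
            - (a * iteratedDeriv (l + 1) (g (i + 1)) x) - iteratedDeriv l (g i) x := by linarith
        rw [e']
        refine (abs_sub _ _).trans ?_
        rw [abs_neg]
        have h4 := (ih l (by omega) i x hx).trans (hf (3 * (i + 1) + 2 - (l + 3)) _ (by omega) _ (by positivity))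
        exact add_le_add hm h4

theorem aux_comb {s : ℝ} (hs1 : 1 < s) (hs2 : s ≤ 2) (N k : ℕ) :
    (N.factorial : ℝ) * (s - 1) ^ k ≤ (k.factorial : ℝ) * ((N - k).factorial : ℝ) * s ^ N := by
  have he : 0 < s - 1 := by linarith
  rcases le_or_gt k N with h | h
  · have h1 : (N.choose k : ℝ) * (s - 1) ^ k ≤ s ^ N := by
      have := add_pow (s - 1) 1 N
      rw [show s - 1 + 1 = s by ring] at this
      rw [this]
      refine le_trans ?_ (Finset.single_le_sum (f := fun m => (s - 1) ^ m * 1 ^ (N - m) * (N.choose m : ℝ))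
        (fun m _ => by positivity) (Finset.mem_range.2 (Nat.lt_succ_of_le h)))
      simp [mul_comm]
    have h2 : (N.factorial : ℝ) = N.choose k * k.factorial * (N - k).factorial := by
      exact_mod_cast (Nat.choose_mul_factorial_mul_factorial h).symm
    calc (N.factorial : ℝ) * (s - 1) ^ k
        = (k.factorial : ℝ) * ((N - k).factorial : ℝ) * ((N.choose k : ℝ) * (s - 1) ^ k) := by rw [h2]; ring
      _ ≤ _ := by gcongr
  · rw [Nat.sub_eq_zero_of_le h.le]
    have h1 : (N.factorial : ℝ) ≤ k.factorial := by exact_mod_cast Nat.factorial_le h.le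
    have h2 : (s - 1) ^ k ≤ 1 := pow_le_one₀ he.le (by linarith)
    have h3 : 1 ≤ s ^ N := one_le_pow₀ hs1.le
    simp only [Nat.factorial_zero, Nat.cast_one, mul_one]
    exact mul_le_mul h1 (h2.trans h3) (by positivity) (by positivity)

theorem aux_fact3_s10 (m : ℕ) : ((3 * m).factorial : ℝ) ≤ 27 ^ m * (m.factorial : ℝ) ^ 3 := by
  induction m with
  | zero => simp
  | succ m ih =>
    rw [show 3 * (m + 1) = 3 * m + 1 + 1 + 1 by ring, Nat.factorial_succ, Nat.factorial_succ,
      Nat.factorial_succ, Nat.factorial_succ m]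
    push_cast
    have hm : (0 : ℝ) ≤ m := by positivity
    have : (3 * (m : ℝ) + 1 + 1 + 1) * ((3 * m + 1 + 1) * (3 * m + 1)) ≤ 27 * (m + 1) ^ 3 := by
      nlinarith [mul_nonneg hm hm]
    calc (3 * (m : ℝ) + 2 + 1) * ((3 * m + 1 + 1) * ((3 * m + 1) * ((3 * m).factorial : ℝ)))
        = ((3 * (m : ℝ) + 1 + 1 + 1) * ((3 * m + 1 + 1) * (3 * m + 1))) * ((3 * m).factorial : ℝ) := by ring
      _ ≤ (27 * (m + 1) ^ 3) * (27 ^ m * (m.factorial : ℝ) ^ 3) := by gcongr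
      _ = _ := by ring

theorem aux_s {R : ℝ} (hR : 1 < R) : ∃ s : ℝ, 1 < s ∧ s ≤ 2 ∧ s ^ 4 ≤ R := by
  have h1 : 1 < Real.sqrt R := Real.lt_sqrt_of_sq_lt (by simpa using hR)
  have h2 : 1 < Real.sqrt (Real.sqrt R) := Real.lt_sqrt_of_sq_lt (by simpa using h1)
  refine ⟨min 2 (Real.sqrt (Real.sqrt R)), lt_min (by norm_num) h2, min_le_left _ _, ?_⟩
  calc (min 2 (Real.sqrt (Real.sqrt R))) ^ 4 ≤ (Real.sqrt (Real.sqrt R)) ^ 4 :=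
        pow_le_pow_left₀ (le_min (by norm_num) (by positivity)) (min_le_right _ _) 4
    _ = ((Real.sqrt (Real.sqrt R)) ^ 2) ^ 2 := by ring
    _ = R := by rw [Real.sq_sqrt (by positivity), Real.sq_sqrt (by linarith)]


/-- flatness property, limit case `s = 3`: if
`|z^{(j)}(t)| ≤ M (3j)!/R^{3j}` on `[0,T]` with `R > 1`, then the series
`y(x,t) = Σ_{i≥0} g_i(x) z^{(i)}(t)` converges, the sum `y` is smooth, Gevrey of order
`1` in `x` and `3` in `t` on `[-1,0]×[0,T]`, and solves `∂ₜy + ∂ₓ³y + a∂ₓy = 0`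
with `y(0,t) = ∂ₓy(0,t) = 0`, `∂ₓ²y(0,t) = z(t)`. -/
theorem stmt10 (a : ℝ) (ha : 0 ≤ a) (T : ℝ) (hT : 0 < T)
    (g : ℕ → ℝ → ℝ)
    (hsmooth : ∀ i, ContDiff ℝ (⊤ : ℕ∞) (g i))
    (hode0 : ∀ x ∈ Set.Icc (-1 : ℝ) 0, deriv^[3] (g 0) x + a * deriv (g 0) x = 0)
    (hic00 : g 0 0 = 0) (hic01 : deriv (g 0) 0 = 0) (hic02 : deriv^[2] (g 0) 0 = 1)
    (hode : ∀ i : ℕ, ∀ x ∈ Set.Icc (-1 : ℝ) 0,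
      deriv^[3] (g (i + 1)) x + a * deriv (g (i + 1)) x = - g i x)
    (hic0 : ∀ i : ℕ, g (i + 1) 0 = 0) (hic1 : ∀ i : ℕ, deriv (g (i + 1)) 0 = 0)
    (hic2 : ∀ i : ℕ, deriv^[2] (g (i + 1)) 0 = 0)
    (z : ℝ → ℝ) (hz : ContDiff ℝ (⊤ : ℕ∞) z) (M R : ℝ) (hM : 0 < M) (hR : 1 < R)
    (hzG : ∀ j : ℕ, ∀ t ∈ Set.Icc (0 : ℝ) T,
      |iteratedDeriv j z t| ≤ M * (Nat.factorial (3 * j) : ℝ) / R ^ (3 * j)) :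
    ∃ y : ℝ → ℝ → ℝ,
      (∀ x ∈ Set.Icc (-1 : ℝ) 0, ∀ t ∈ Set.Icc (0 : ℝ) T,
        HasSum (fun i : ℕ => g i x * iteratedDeriv i z t) (y x t)) ∧
      ContDiff ℝ (⊤ : ℕ∞) (fun q : ℝ × ℝ => y q.1 q.2) ∧
      -- Gevrey of order `1` in `x` and `3` in `t`
      (∃ C R₁ R₂ : ℝ, 0 < C ∧ 0 < R₁ ∧ 0 < R₂ ∧
        ∀ l m : ℕ, ∀ x ∈ Set.Icc (-1 : ℝ) 0, ∀ t ∈ Set.Icc (0 : ℝ) T,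
          |iteratedDeriv l (fun x' => iteratedDeriv m (fun t' => y x' t') t) x| ≤
            C * (Nat.factorial l : ℝ) * (Nat.factorial m : ℝ) ^ 3 /
              (R₁ ^ l * R₂ ^ m)) ∧
      (∀ x ∈ Set.Ioo (-1 : ℝ) 0, ∀ t ∈ Set.Ioo (0 : ℝ) T,
        deriv (fun t' => y x t') t + iteratedDeriv 3 (fun x' => y x' t) x +
          a * deriv (fun x' => y x' t) x = 0) ∧
      (∀ t ∈ Set.Ioo (0 : ℝ) T,
        y 0 t = 0 ∧ deriv (fun x' => y x' t) 0 = 0 ∧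
          iteratedDeriv 2 (fun x' => y x' t) 0 = z t) := by

  have hK : 0 < 1 + a := by linarith
  have hode0' : ∀ x ∈ Set.Icc (-1 : ℝ) 0,
      iteratedDeriv 3 (g 0) x + a * iteratedDeriv 1 (g 0) x = 0 := by
    simpa only [iteratedDeriv_one, iteratedDeriv_eq_iterate (n := 3)] using hode0
  have hode' : ∀ i : ℕ, ∀ x ∈ Set.Icc (-1 : ℝ) 0,
      iteratedDeriv 3 (g (i + 1)) x + a * iteratedDeriv 1 (g (i + 1)) x = - g i x := by
    simpa only [iteratedDeriv_one, iteratedDeriv_eq_iterate (n := 3)] using hode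
  have hic01' : iteratedDeriv 1 (g 0) 0 = 0 := by simpa only [iteratedDeriv_one] using hic01
  have hic02' : iteratedDeriv 2 (g 0) 0 = 1 := by
    simpa only [iteratedDeriv_eq_iterate] using hic02
  have hic1' : ∀ i, iteratedDeriv 1 (g (i + 1)) 0 = 0 := by
    simpa only [iteratedDeriv_one] using hic1
  have hic2' : ∀ i, iteratedDeriv 2 (g (i + 1)) 0 = 0 := by
    simpa only [iteratedDeriv_eq_iterate] using hic2
  have hgl := aux_gl ha g hsmooth hode0' hic00 hic01' hic02' hode' hic0 hic1' hic2'
  obtain ⟨s, hs1, hs2, hs4⟩ := aux_s hR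
  have hs0 : 0 < s := by linarith
  have he : 0 < s - 1 := by linarith
  set p : ℝ := (s ^ 3)⁻¹ with hp
  have hp0 : 0 ≤ p := by positivity
  have hp1 : p < 1 := inv_lt_one_of_one_lt₀ (one_lt_pow₀ hs1 (by norm_num))
  have hp1' : 0 < 1 - p := by linarith
  let W : ℕ → ℝ := fun i => ((3 * i).factorial : ℝ) / s ^ (6 * i)
  have hW : ∀ i, 0 < W i := fun i => by positivity
  obtain ⟨G, hG, hG'⟩ := aux_lift (α := -1) (β := 0) (by norm_num) hp0 hp1
    (fun l => (1 + a) ^ l * (l.factorial : ℝ) / (s - 1) ^ l)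
    (fun l i x => iteratedDeriv l (g i) x * W i)
    (fun l i x => (aux_hasDeriv (hsmooth i) l x).mul_const (W i)) (by
      intro l i x hx
      rw [abs_mul, abs_of_pos (hW i)]
      have h1 := hgl l i x hx
      have h2 : (1 + a) ^ l / ((3 * i + 2 - l).factorial : ℝ)
          ≤ (1 + a) ^ l / ((3 * i - l).factorial : ℝ) := by
        have : (3 * i - l).factorial ≤ (3 * i + 2 - l).factorial := Nat.factorial_le (by omega)
        gcongr
      have h3 := aux_comb hs1 hs2 (3 * i) l
      calc |iteratedDeriv l (g i) x| * W i
          ≤ (1 + a) ^ l / ((3 * i - l).factorial : ℝ) * W i :=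
            mul_le_mul_of_nonneg_right (h1.trans h2) (hW i).le
        _ = (1 + a) ^ l * (((3 * i).factorial : ℝ) * (s - 1) ^ l)
            / (((3 * i - l).factorial : ℝ) * s ^ (6 * i) * (s - 1) ^ l) := by
            simp only [W]; field_simp
        _ ≤ (1 + a) ^ l * ((l.factorial : ℝ) * ((3 * i - l).factorial : ℝ) * s ^ (3 * i))
            / (((3 * i - l).factorial : ℝ) * s ^ (6 * i) * (s - 1) ^ l) := by gcongr
        _ = _ := by
            rw [hp, inv_pow, ← pow_mul, show 6 * i = 3 * i + 3 * i by ring, pow_add]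
            field_simp)
  obtain ⟨U, hU, hU'⟩ := aux_lift (α := 0) (β := T) hT hp0 hp1
    (fun m => M * ((3 * m).factorial : ℝ) / (s - 1) ^ (3 * m))
    (fun m i t => iteratedDeriv (i + m) z t / W i)
    (fun m i t => (aux_hasDeriv hz (i + m) t).div_const (W i)) (by
      intro m i t ht
      rw [abs_div, abs_of_pos (hW i)]
      have h1 := hzG (i + m) t ht
      have h3 := aux_comb hs1 hs2 (3 * (i + m)) (3 * m)
      rw [show 3 * (i + m) - 3 * m = 3 * i by omega] at h3
      have hRs : s ^ (12 * i + 3 * m) ≤ R ^ (3 * (i + m)) := by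
        calc s ^ (12 * i + 3 * m) ≤ s ^ (12 * i + 12 * m) :=
              pow_le_pow_right₀ hs1.le (by omega)
          _ = (s ^ 4) ^ (3 * (i + m)) := by rw [← pow_mul]; congr 1; ring
          _ ≤ _ := pow_le_pow_left₀ (by positivity) hs4 _
      have hR0 : 0 < R := by linarith
      calc |iteratedDeriv (i + m) z t| / W i
          ≤ (M * ((3 * (i + m)).factorial : ℝ) / R ^ (3 * (i + m))) / W i := by
            have := hW i
            gcongr
        _ ≤ (M * ((3 * (i + m)).factorial : ℝ) / s ^ (12 * i + 3 * m)) / W i := by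
            have := hW i
            gcongr
        _ = M * (((3 * (i + m)).factorial : ℝ) * (s - 1) ^ (3 * m)) * s ^ (6 * i)
            / (s ^ (12 * i + 3 * m) * ((3 * i).factorial : ℝ) * (s - 1) ^ (3 * m)) := by
            simp only [W]; field_simp
        _ ≤ M * (((3 * m).factorial : ℝ) * ((3 * i).factorial : ℝ) * s ^ (3 * (i + m))) * s ^ (6 * i)
            / (s ^ (12 * i + 3 * m) * ((3 * i).factorial : ℝ) * (s - 1) ^ (3 * m)) := by gcongr
        _ = _ := by
            rw [hp, inv_pow, ← pow_mul, show 12 * i + 3 * m = 3 * (i + m) + 6 * i + 3 * i by ring,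
              pow_add, pow_add]
            field_simp)
  -- derivatives in `t` and in `x`
  have hdt : ∀ m x t, iteratedDeriv m (fun t' => inner ℝ (G x) (U t')) t
      = inner ℝ (G x) (iteratedDeriv m U t) := fun m x t =>
    congrFun (aux_clm (innerSL ℝ (G x)) hU m) t
  have hdx : ∀ l w x, iteratedDeriv l (fun x' => inner ℝ (G x') w) x
      = inner ℝ (iteratedDeriv l G x) w := by
    intro l w x
    have := congrFun (aux_clm (innerSL ℝ w) hG l) x
    simp only [innerSL_apply_apply] at this
    simpa only [real_inner_comm] using this
  have hdxt : ∀ l m x t,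
      iteratedDeriv l (fun x' => iteratedDeriv m (fun t' => inner ℝ (G x') (U t')) t) x
      = inner ℝ (iteratedDeriv l G x) (iteratedDeriv m U t) := by
    intro l m x t
    simp only [hdt]
    exact hdx l _ x
  have hsum : ∀ l m, ∀ x ∈ Set.Icc (-1 : ℝ) 0, ∀ t ∈ Set.Icc (0 : ℝ) T,
      HasSum (fun i : ℕ => iteratedDeriv l (g i) x * iteratedDeriv (i + m) z t)
        (inner ℝ (iteratedDeriv l G x) (iteratedDeriv m U t)) := by
    intro l m x hx t ht
    refine (lp.hasSum_inner (𝕜 := ℝ) (iteratedDeriv l G x) (iteratedDeriv m U t)).congr_fun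
      fun i => ?_
    rw [(hG' l x hx).1 i, (hU' m t ht).1 i]
    have := (hW i).ne'
    simp only [RCLike.inner_apply, conj_trivial]
    field_simp
  have h0m : (0 : ℝ) ∈ Set.Icc (-1 : ℝ) 0 := by norm_num
  refine ⟨fun x t => inner ℝ (G x) (U t), ?_, ?_, ?_, ?_, ?_⟩
  · intro x hx t ht
    simpa using hsum 0 0 x hx t ht
  · exact (hG.comp contDiff_fst).inner ℝ (hU.comp contDiff_snd)
  · refine ⟨M / (1 - p) ^ 2, (s - 1) / (1 + a), (s - 1) ^ 3 / 27, by positivity, by positivity,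
      by positivity, ?_⟩
    intro l m x hx t ht
    rw [hdxt]
    have h1 := (hG' l x hx).2
    have h2 := (hU' m t ht).2
    calc |inner ℝ (iteratedDeriv l G x) (iteratedDeriv m U t)|
        ≤ ‖iteratedDeriv l G x‖ * ‖iteratedDeriv m U t‖ := abs_real_inner_le_norm _ _
      _ ≤ ((1 + a) ^ l * (l.factorial : ℝ) / (s - 1) ^ l / (1 - p)) *
          (M * ((3 * m).factorial : ℝ) / (s - 1) ^ (3 * m) / (1 - p)) := by gcongr
      _ ≤ ((1 + a) ^ l * (l.factorial : ℝ) / (s - 1) ^ l / (1 - p)) *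
          (M * (27 ^ m * (m.factorial : ℝ) ^ 3) / (s - 1) ^ (3 * m) / (1 - p)) := by
          have := aux_fact3_s10 m
          gcongr
      _ = _ := by
          rw [div_pow, div_pow, ← pow_mul]
          field_simp
  · intro x hx t ht
    have hx' := Set.Ioo_subset_Icc_self hx
    have ht' := Set.Ioo_subset_Icc_self ht
    have e1 := hdt 1 x t
    have e2 := hdx 3 (U t) x
    have e3 := hdx 1 (U t) x
    rw [iteratedDeriv_one] at e1 e3
    rw [e1, e2, e3]
    have s1 := hsum 0 1 x hx' t ht'
    have s2 := hsum 3 0 x hx' t ht'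
    have s3 := (hsum 1 0 x hx' t ht').mul_left a
    simp only [iteratedDeriv_zero, add_zero] at s1 s2 s3
    have s4 := s2.add s3
    have s5 : HasSum (fun i : ℕ => -(g i x * iteratedDeriv (i + 1) z t))
        (inner ℝ (iteratedDeriv 3 G x) (U t) + a * inner ℝ (iteratedDeriv 1 G x) (U t)) := by
      have h5 := (hasSum_nat_add_iff' 1).2 s4
      simp only [Finset.range_one, Finset.sum_singleton] at h5
      have h6 : iteratedDeriv 3 (g 0) x * iteratedDeriv 0 z t
          + a * (iteratedDeriv 1 (g 0) x * iteratedDeriv 0 z t) = 0 := by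
        linear_combination (iteratedDeriv 0 z t) * hode0' x hx'
      rw [h6, sub_zero] at h5
      refine h5.congr_fun fun i => ?_
      linear_combination (-iteratedDeriv (i + 1) z t) * hode' i x hx'
    have := s1.neg.unique s5
    rw [iteratedDeriv_one] at *
    linarith
  · intro t ht
    have ht' := Set.Ioo_subset_Icc_self ht
    have g0 : ∀ i, g i 0 = 0 := fun i => by cases i <;> simp [hic00, hic0]
    have g1 : ∀ i, iteratedDeriv 1 (g i) 0 = 0 := fun i => by
      cases i
      · exact hic01'
      · exact hic1' _
    have s0 := hsum 0 0 0 h0m t ht'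
    have s1 := hsum 1 0 0 h0m t ht'
    have s2 := hsum 2 0 0 h0m t ht'
    have e1 := hdx 1 (U t) 0
    rw [iteratedDeriv_one] at e1
    simp only [iteratedDeriv_zero, add_zero, g0, g1, zero_mul] at s0 s1 s2
    refine ⟨s0.unique hasSum_zero, ?_, ?_⟩
    · rw [e1]; exact s1.unique hasSum_zero
    · rw [hdx 2 (U t) 0]
      refine s2.unique ?_
      have := hasSum_single (f := fun i => iteratedDeriv 2 (g i) 0 * iteratedDeriv i z t) 0
        (fun i hi => by
          obtain ⟨j, rfl⟩ := Nat.exists_eq_succ_of_ne_zero hi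
          simp [hic2' j])
      simpa [hic02'] using this
end
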